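/- arXiv:2603.26484 — 4 statements merged into one kernel-verified Lean document; each statement's English description precedes it below -/
import Mathlib

section
/- A real γ ∈ (0,1) is computably approximable and covered by some Solovay test (i.e., is c.a. and not Martin-Löf random) if and only if γ is covered by a converging Solovay test. -/
open Filter

/-- A computable approximation of a real `α`: a computable sequence of
rationals in `[0,1]` converging to `α`. -/
def IsCompApprox (a : ℕ → ℚ) (α : ℝ) : Prop :=
  Computable a ∧ (∀ s, a s ∈ Set.Icc (0 : ℚ) 1) ∧
    Tendsto (fun s => (a s : ℝ)) atTop (nhds α)

/-- A d.c.e. approximation: a computable approximation with bounded variation. -/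
def IsDCEApprox (a : ℕ → ℚ) (α : ℝ) : Prop :=
  IsCompApprox a α ∧ Summable (fun s => |(a (s + 1) : ℝ) - (a s : ℝ)|)

/-- A computable order: a nondecreasing unbounded computable function. -/
def IsComputableOrder (f : ℕ → ℕ) : Prop :=
  Computable f ∧ Monotone f ∧ Tendsto f atTop atTop

/-- The liminf (in the extended reals) of `|(α - a (f s)) / (α - a s)|`. -/
noncomputable def speedLiminf (a : ℕ → ℚ) (f : ℕ → ℕ) (α : ℝ) : EReal :=
  Filter.liminf (fun s => ((|(α - (a (f s) : ℝ)) / (α - (a s : ℝ))| : ℝ) : EReal)) atTop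

/-- A computable approximation `a` of `α` is `ρ`-speedable. -/
def IsRhoSpeedable (a : ℕ → ℚ) (α : ℝ) (ρ : ℚ) : Prop :=
  (∃ q : ℚ, α = (q : ℝ)) ∨
    ∃ f, IsComputableOrder f ∧ speedLiminf a f α ≤ (((ρ : ℝ) : EReal))

/-- A computable approximation is speedable if it is `ρ`-speedable for some rational
`ρ ∈ [0,1)`. -/
def IsSpeedable (a : ℕ → ℚ) (α : ℝ) : Prop :=
  ∃ ρ : ℚ, 0 ≤ ρ ∧ ρ < 1 ∧ IsRhoSpeedable a α ρ

/-- A Solovay test: computable sequences of rationals `l i ≤ r i` in `[0,1]`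
with `Σ (r i - l i) < ∞`. -/
structure SolovayTest where
  l : ℕ → ℚ
  r : ℕ → ℚ
  comp_l : Computable l
  comp_r : Computable r
  mem_l : ∀ i, l i ∈ Set.Icc (0 : ℚ) 1
  mem_r : ∀ i, r i ∈ Set.Icc (0 : ℚ) 1
  le : ∀ i, l i ≤ r i
  summable : Summable (fun i => (r i : ℝ) - (l i : ℝ))

/-- A real `γ` is covered by a Solovay test if `γ ∈ [l i, r i]` for infinitely many `i`. -/
def SolovayTest.Covers (T : SolovayTest) (γ : ℝ) : Prop :=
  ∃ᶠ i in atTop, γ ∈ Set.Icc (T.l i : ℝ) (T.r i : ℝ)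

/-- The sequence of endpoints `l 0, r 0, l 1, r 1, …` of a Solovay test. -/
def SolovayTest.endpoints (T : SolovayTest) (n : ℕ) : ℚ :=
  if n % 2 = 0 then T.l (n / 2) else T.r (n / 2)

/-- A Solovay test is converging if its sequence of endpoints converges. -/
def SolovayTest.Converging (T : SolovayTest) : Prop :=
  ∃ L : ℝ, Tendsto (fun n => (T.endpoints n : ℝ)) atTop (nhds L)


theorem computable_find {α} [Primcodable α] {p : α → ℕ → Bool} (hp : Computable₂ p)
    (H : ∀ a, ∃ n, p a n = true) : Computable fun a => Nat.find (H a) := by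
  have h1 : Partrec fun a => Nat.rfind (fun n => (p a n : Part Bool)) :=
    Partrec.rfind (p := fun a n => (p a n : Part Bool)) hp
  refine Partrec.of_eq h1 fun a => ?_
  refine Part.eq_some_iff.2 (Nat.mem_rfind.2 ?_)
  refine ⟨?_, fun {m} hm => ?_⟩
  · have := Nat.find_spec (H a)
    simp [this]
  · have := Nat.find_min (H a) hm
    simpa using this

@[reducible]
def rawInst : Encodable ℚ := Rat.instEncodable

def rawE (q : ℚ) : ℕ := @Encodable.encode ℚ rawInst q

def intCode : ℤ → ℕ
  | Int.ofNat m => 2 * m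
  | Int.negSucc m => 2 * m + 1

theorem encode_int (z : ℤ) : Encodable.encode z = intCode z := by
  cases z <;> rfl

theorem rawE_eq (q : ℚ) : rawE q = Nat.pair (intCode q.num) q.den := by
  rw [← encode_int]; rfl

def codeAbs (x : ℕ) : ℕ := if x % 2 = 0 then x / 2 else x / 2 + 1

theorem codeAbs_intCode (z : ℤ) : codeAbs (intCode z) = z.natAbs := by
  cases z with
  | ofNat m => simp [codeAbs, intCode]
  | negSucc m => simp [codeAbs, intCode]; omega

theorem intCode_surj (x : ℕ) : ∃ z, intCode z = x := by
  rcases Nat.even_or_odd' x with ⟨m, h | h⟩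
  · exact ⟨Int.ofNat m, h.symm⟩
  · exact ⟨Int.negSucc m, h.symm⟩

def myGcd (a b : ℕ) : ℕ := Nat.findGreatest (fun d => a % d = 0 ∧ b % d = 0) b

theorem myGcd_eq (a b : ℕ) (hb : 0 < b) : myGcd a b = Nat.gcd a b := by
  unfold myGcd
  rw [Nat.findGreatest_eq_iff]
  refine ⟨Nat.gcd_le_right _ hb, fun _ => ⟨Nat.mod_eq_zero_of_dvd (Nat.gcd_dvd_left _ _),
    Nat.mod_eq_zero_of_dvd (Nat.gcd_dvd_right _ _)⟩, ?_⟩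
  rintro n hn - ⟨h1, h2⟩
  exact absurd (Nat.le_of_dvd (Nat.gcd_pos_of_pos_right _ hb)
    (Nat.dvd_gcd (Nat.dvd_of_mod_eq_zero h1) (Nat.dvd_of_mod_eq_zero h2))) (by omega)

theorem myGcd_prim : Primrec₂ myGcd := by
  have : PrimrecRel fun (p : ℕ × ℕ) (d : ℕ) => p.1 % d = 0 ∧ p.2 % d = 0 := by
    refine PrimrecPred.and ?_ ?_
    · exact Primrec.eq.comp (Primrec.nat_mod.comp (Primrec.fst.comp Primrec.fst) Primrec.snd) (Primrec.const 0)
    · exact Primrec.eq.comp (Primrec.nat_mod.comp (Primrec.snd.comp Primrec.fst) Primrec.snd) (Primrec.const 0)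
  exact Primrec.nat_findGreatest Primrec.snd this

theorem codeAbs_prim : Primrec codeAbs := by
  unfold codeAbs
  refine Primrec.ite (Primrec.eq.comp (Primrec.nat_mod.comp Primrec.id (Primrec.const 2)) (Primrec.const 0)) ?_ ?_
  · exact Primrec.nat_div.comp Primrec.id (Primrec.const 2)
  · exact Primrec.succ.comp (Primrec.nat_div.comp Primrec.id (Primrec.const 2))

def inS (k : ℕ) : Bool :=
  decide (0 < k.unpair.2) && decide (myGcd (codeAbs k.unpair.1) k.unpair.2 = 1)

theorem inS_prim : Primrec inS := by
  have h1 : Primrec fun k : ℕ => k.unpair.1 := Primrec.fst.comp Primrec.unpair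
  have h2 : Primrec fun k : ℕ => k.unpair.2 := Primrec.snd.comp Primrec.unpair
  refine Primrec.and.comp ?_ ?_
  · exact (Primrec.nat_lt.comp (Primrec.const 0) h2).decide
  · exact (Primrec.eq.comp (myGcd_prim.comp (codeAbs_prim.comp h1) h2) (Primrec.const 1)).decide

theorem inS_iff (k : ℕ) : inS k = true ↔ k ∈ Set.range rawE := by
  simp only [inS, Bool.and_eq_true, decide_eq_true_eq, Set.mem_range]
  constructor
  · rintro ⟨h1, h2⟩
    rw [myGcd_eq _ _ h1] at h2
    obtain ⟨z, hz⟩ := intCode_surj k.unpair.1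
    rw [← hz, codeAbs_intCode] at h2
    refine ⟨⟨z, k.unpair.2, h1.ne', h2⟩, ?_⟩
    rw [rawE_eq]; simp [hz]
  · rintro ⟨q, rfl⟩
    rw [rawE_eq]
    simp only [Nat.unpair_pair, codeAbs_intCode]
    rw [myGcd_eq _ _ q.pos]
    exact ⟨q.pos, q.reduced⟩

theorem rawE_inj : Function.Injective rawE := @Encodable.encode_injective ℚ rawInst

theorem S_unb (x : ℕ) : ∃ y, (decide (x < y) && inS y) = true := by
  obtain ⟨y, hy, h⟩ := (Set.infinite_range_of_injective rawE_inj).exists_gt x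
  exact ⟨y, by simp [h, (inS_iff y).2 hy]⟩

theorem S_ne : ∃ y, inS y = true := ⟨_, (inS_iff (rawE 0)).2 ⟨0, rfl⟩⟩

def gEnum (n : ℕ) : ℕ := Nat.rec (Nat.find S_ne) (fun _ x => Nat.find (S_unb x)) n

theorem gEnum_comp : Computable gEnum := by
  have h : Computable₂ fun (x y : ℕ) => decide (x < y) && inS y :=
    (Primrec.and.comp (Primrec.nat_lt.decide) (inS_prim.comp Primrec.snd)).to_comp
  have h2 := computable_find h S_unb
  refine (Computable.nat_rec (f := fun n : ℕ => n) (g := fun _ => Nat.find S_ne)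
    (h := fun _ p => Nat.find (S_unb p.2)) Computable.id (Computable.const _) ?_)
  exact (h2.comp (Computable.snd.comp Computable.snd))

theorem rawE_ofNat (n : ℕ) : rawE (Denumerable.ofNat ℚ n) = gEnum n := by
  let := rawInst
  let := @Encodable.decidableRangeEncode ℚ rawInst
  let : Infinite (Set.range (@Encodable.encode ℚ rawInst)) :=
    Infinite.of_injective _ (Equiv.ofInjective _ (@Encodable.encode_injective ℚ rawInst)).injective
  have key : rawE (Denumerable.ofNat ℚ n) =
      (Nat.Subtype.ofNat (Set.range (@Encodable.encode ℚ rawInst)) n : ℕ) := by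
    have h1 : Denumerable.ofNat ℚ n = (@Encodable.equivRangeEncode ℚ rawInst).symm
        (Nat.Subtype.ofNat (Set.range (@Encodable.encode ℚ rawInst)) n) := by
      let := Nat.Subtype.denumerable (Set.range (@Encodable.encode ℚ rawInst))
      exact Denumerable.ofEquiv_ofNat (Set.range (@Encodable.encode ℚ rawInst))
        (@Encodable.equivRangeEncode ℚ rawInst) n
    rw [h1]
    exact congrArg Subtype.val ((@Encodable.equivRangeEncode ℚ rawInst).apply_symm_apply _)
  rw [key]
  clear key
  induction n with
  | zero =>
    apply le_antisymm
    · exact Subtype.coe_le_coe.2 (bot_le (a := (⟨_, (inS_iff _).1 (Nat.find_spec S_ne)⟩ :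
        Set.range (@Encodable.encode ℚ rawInst))))
    · exact Nat.find_min' S_ne ((inS_iff _).2 (Subtype.property _))
  | succ n ih =>
    have hg : gEnum (n+1) = Nat.find (S_unb (gEnum n)) := rfl
    have hs := Nat.find_spec (S_unb (gEnum n))
    rw [← hg] at hs
    simp only [Bool.and_eq_true, decide_eq_true_eq] at hs
    apply le_antisymm
    · refine Subtype.coe_le_coe.2 (Nat.Subtype.succ_le_of_lt
        (s := Set.range (@Encodable.encode ℚ rawInst)) (x := ⟨_, (inS_iff _).1 hs.2⟩) ?_)
      rw [← Subtype.coe_lt_coe, ih]; exact hs.1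
    · rw [hg]
      refine Nat.find_min' (S_unb (gEnum n)) ?_
      simp only [Bool.and_eq_true, decide_eq_true_eq]
      refine ⟨?_, (inS_iff _).2 (Subtype.property _)⟩
      rw [← ih]
      exact Subtype.coe_lt_coe.2 (Nat.Subtype.lt_succ_self _)

theorem rawE_comp : Computable rawE := by
  refine (gEnum_comp.comp (Computable.encode (α := ℚ))).of_eq fun q => ?_
  rw [← rawE_ofNat, Denumerable.ofNat_encode]

/-- code of numerator -/
def cN (q : ℚ) : ℕ := intCode q.num
def pN (q : ℚ) : ℕ := cN q / 2

theorem cN_comp : Computable cN := by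
  refine ((Primrec.fst.comp Primrec.unpair).to_comp.comp rawE_comp).of_eq fun q => ?_
  rw [rawE_eq]; simp [cN]

theorem den_comp : Computable Rat.den := by
  refine ((Primrec.snd.comp Primrec.unpair).to_comp.comp rawE_comp).of_eq fun q => ?_
  rw [rawE_eq]; simp

theorem pN_comp : Computable pN :=
  (Primrec.nat_div.comp Primrec.id (Primrec.const 2)).to_comp.comp cN_comp

theorem pN_eq {q : ℚ} (h : cN q % 2 = 0) : (q : ℚ) = pN q / q.den := by
  rw [pN]
  rw [cN] at *
  cases hn : q.num with
  | ofNat m =>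
    rw [hn] at h
    conv_lhs => rw [← Rat.num_div_den q, hn]
    simp [intCode]
  | negSucc m => rw [hn] at h; simp [intCode] at h

theorem cN_nonneg {q : ℚ} (h : 0 ≤ q) : cN q % 2 = 0 := by
  rw [cN]
  cases hn : q.num with
  | ofNat m => simp [intCode]
  | negSucc m =>
    have := Rat.num_nonneg.2 h
    rw [hn] at this; simp at this

theorem div_comp {α} [Primcodable α] {u v : α → ℕ} (hu : Computable u) (hv : Computable v)
    (hv0 : ∀ a, 0 < v a) : Computable fun a => (u a : ℚ) / v a := by
  let p : α → ℕ → Bool := fun a n =>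
    let q := Denumerable.ofNat ℚ n
    decide (cN q % 2 = 0) && decide (pN q * v a = u a * q.den)
  have key : ∀ a n, p a n = true ↔ Denumerable.ofNat ℚ n = (u a : ℚ) / v a := by
    intro a n
    simp only [p, Bool.and_eq_true, decide_eq_true_eq]
    generalize Denumerable.ofNat ℚ n = q
    have hva : (v a : ℚ) ≠ 0 := by have := hv0 a; positivity
    have hd : (q.den : ℚ) ≠ 0 := by have := q.pos; positivity
    have main : cN q % 2 = 0 → (pN q * v a = u a * q.den ↔ q = (u a : ℚ) / v a) := by
      intro h
      have e := pN_eq h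
      constructor
      · intro h2
        rw [e, div_eq_div_iff hd hva]; exact_mod_cast h2
      · intro h2
        have e := h2.symm.trans e
        rw [div_eq_div_iff hva hd] at e
        exact_mod_cast e.symm
    constructor
    · rintro ⟨h, h2⟩; exact (main h).1 h2
    · intro h
      have h0 : cN q % 2 = 0 := cN_nonneg (by rw [h]; positivity)
      exact ⟨h0, (main h0).2 h⟩
  have hp : Computable₂ p := by
    have hq : Computable fun x : α × ℕ => Denumerable.ofNat ℚ x.2 :=
      (Computable.ofNat ℚ).comp Computable.snd
    refine Primrec.and.to_comp.comp ?_ ?_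
    · exact ((Primrec.eq.comp (Primrec.nat_mod.comp Primrec.id (Primrec.const 2))
        (Primrec.const 0)).decide).to_comp.comp (cN_comp.comp hq)
    · exact (Primrec.eq (α := ℕ)).decide.to_comp.comp
        (Primrec.nat_mul.to_comp.comp (pN_comp.comp hq) (hv.comp Computable.fst))
        (Primrec.nat_mul.to_comp.comp (hu.comp Computable.fst) (den_comp.comp hq))
  have H : ∀ a, ∃ n, p a n = true := fun a =>
    ⟨@Encodable.encode ℚ Primcodable.toEncodable ((u a : ℚ) / v a), by
      rw [key]; exact Denumerable.ofNat_encode _⟩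
  refine ((Computable.ofNat ℚ).comp (computable_find hp H)).of_eq fun a => ?_
  exact (key _ _).1 (Nat.find_spec (H a))

def leB (x y : ℚ) : Bool := decide (pN x * y.den ≤ pN y * x.den)

theorem leB_comp : Computable₂ leB :=
  Primrec.nat_le.decide.to_comp.comp
    (Primrec.nat_mul.to_comp.comp (pN_comp.comp Computable.fst) (den_comp.comp Computable.snd))
    (Primrec.nat_mul.to_comp.comp (pN_comp.comp Computable.snd) (den_comp.comp Computable.fst))

theorem leB_iff {x y : ℚ} (hx : 0 ≤ x) (hy : 0 ≤ y) : leB x y = true ↔ x ≤ y := by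
  have h1 := pN_eq (cN_nonneg hx)
  have h2 := pN_eq (cN_nonneg hy)
  have hdx : (0 : ℚ) < x.den := by exact_mod_cast x.pos
  have hdy : (0 : ℚ) < y.den := by exact_mod_cast y.pos
  have : x ≤ y ↔ (pN x : ℚ) / x.den ≤ (pN y : ℚ) / y.den := by rw [← h1, ← h2]
  rw [this, div_le_div_iff₀ hdx hdy, leB, decide_eq_true_eq]
  norm_cast

theorem converging_of {T : SolovayTest} {γ : ℝ}
    (hl : Tendsto (fun n => (T.l n : ℝ)) atTop (nhds γ))
    (hr : Tendsto (fun n => (T.r n : ℝ)) atTop (nhds γ)) : T.Converging := by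
  refine ⟨γ, ?_⟩
  rw [Metric.tendsto_atTop] at *
  intro ε hε
  obtain ⟨N1, h1⟩ := hl ε hε
  obtain ⟨N2, h2⟩ := hr ε hε
  refine ⟨2 * (N1 + N2), fun n hn => ?_⟩
  unfold SolovayTest.endpoints
  split_ifs
  · exact h1 _ (by omega)
  · exact h2 _ (by omega)

theorem first_hit (p : ℕ → ℕ → Bool) (cp : Computable fun x : ℕ × ℕ => p x.1 x.2) :
    ∃ actp : ℕ × ℕ → Bool, Computable actp ∧
      ∀ i s, actp (i, s) = true ↔ p i s = true ∧ ∀ t < s, ¬ p i t = true := by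
  have H : ∀ x : ℕ × ℕ, ∃ t, (p x.1 t || decide (t = x.2)) = true := fun x => ⟨x.2, by simp⟩
  have cm : Computable fun x : ℕ × ℕ => Nat.find (H x) := by
    refine computable_find ?_ H
    refine Primrec.or.to_comp.comp (g := fun y : (ℕ × ℕ) × ℕ => p y.1.1 y.2)
      (h := fun y : (ℕ × ℕ) × ℕ => decide (y.2 = y.1.2)) ?_ ?_
    · exact cp.comp (Computable.pair (Computable.fst.comp Computable.fst) Computable.snd)
    · exact (Primrec.eq (α := ℕ)).decide.to_comp.comp Computable.snd
        (Computable.snd.comp Computable.fst)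
  let actp : ℕ × ℕ → Bool := fun x => p x.1 x.2 && decide (Nat.find (H x) = x.2)
  have cactp : Computable actp :=
    Primrec.and.to_comp.comp cp
      ((Primrec.eq (α := ℕ)).decide.to_comp.comp cm Computable.snd)
  refine ⟨actp, cactp, ?_⟩
  show ∀ i s, actp (i, s) = true ↔ p i s = true ∧ ∀ t < s, ¬ p i t = true
  · intro i s
    simp only [actp, Bool.and_eq_true, decide_eq_true_eq]
    refine and_congr_right fun h => ?_
    rw [Nat.find_eq_iff]
    constructor
    · rintro ⟨-, h2⟩ t ht h3
      exact h2 t ht (by simp [h3])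
    · intro h2
      refine ⟨by simp, fun t ht h3 => ?_⟩
      simp only [Bool.or_eq_true, decide_eq_true_eq] at h3
      rcases h3 with h3 | h3
      · exact h2 t ht h3
      · omega

theorem core {γ : ℝ} {a lo hi : ℕ → ℚ} (ha : IsCompApprox a γ)
    (clo : Computable lo) (chi : Computable hi)
    (mlo : ∀ i, lo i ∈ Set.Icc (0 : ℚ) 1) (mhi : ∀ i, hi i ∈ Set.Icc (0 : ℚ) 1)
    (hle : ∀ i, lo i ≤ hi i) (hsum : Summable fun i => (hi i : ℝ) - (lo i : ℝ))
    (hcov : ∃ᶠ i in atTop, γ ∈ Set.Ioo (lo i : ℝ) (hi i : ℝ)) :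
    ∃ T : SolovayTest, T.Converging ∧ T.Covers γ := by
  obtain ⟨ca, ma, ta⟩ := ha
  let p : ℕ → ℕ → Bool := fun i s => decide (i ≤ s) && (leB (lo i) (a s) && leB (a s) (hi i))
  have hp : ∀ i s, p i s = true ↔ i ≤ s ∧ lo i ≤ a s ∧ a s ≤ hi i := by
    intro i s
    simp only [p, Bool.and_eq_true, decide_eq_true_eq, leB_iff (mlo i).1 (ma s).1,
      leB_iff (ma s).1 (mhi i).1]
  have cp : Computable fun x : ℕ × ℕ => p x.1 x.2 := by
    have c1 := clo.comp (Computable.fst (α := ℕ) (β := ℕ))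
    have c2 := chi.comp (Computable.fst (α := ℕ) (β := ℕ))
    have c3 := ca.comp (Computable.snd (α := ℕ) (β := ℕ))
    exact Primrec.and.to_comp.comp (Primrec.nat_le.decide.to_comp)
      (Primrec.and.to_comp.comp (leB_comp.comp c1 c3) (leB_comp.comp c3 c2))
  obtain ⟨actp, cactp, hact⟩ := first_hit p cp
  let act : ℕ → Bool := fun n => actp n.unpair
  have cact : Computable act := cactp.comp Primrec.unpair.to_comp
  have actP : ∀ n, act n = true → n.unpair.1 ≤ n.unpair.2 ∧
      lo n.unpair.1 ≤ a n.unpair.2 ∧ a n.unpair.2 ≤ hi n.unpair.1 := fun n hn =>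
    (hp _ _).1 ((hact n.unpair.1 n.unpair.2).1 hn).1
  have actI : Set.InjOn (fun n : ℕ => n.unpair.1) {n | act n = true} := by
    intro n hn m hm h
    have h1 := (hact n.unpair.1 n.unpair.2).1 hn
    have h2 := (hact m.unpair.1 m.unpair.2).1 hm
    simp only at h
    rw [← h] at h2
    have : n.unpair.2 = m.unpair.2 := by
      rcases lt_trichotomy n.unpair.2 m.unpair.2 with h3 | h3 | h3
      · exact absurd h1.1 (h2.2 _ h3)
      · exact h3
      · exact absurd h2.1 (h1.2 _ h3)
    rw [← Nat.pair_unpair n, ← Nat.pair_unpair m, h, this]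
  have c1 : Computable fun n : ℕ => n.unpair.1 := (Primrec.fst.comp Primrec.unpair).to_comp
  let T : SolovayTest :=
    { l := fun n => bif act n then lo n.unpair.1 else a n
      r := fun n => bif act n then hi n.unpair.1 else a n
      comp_l := Computable.cond cact (clo.comp c1) ca
      comp_r := Computable.cond cact (chi.comp c1) ca
      mem_l := fun n => by cases act n <;> simp only [cond_true, cond_false, mlo, ma]
      mem_r := fun n => by cases act n <;> simp only [cond_true, cond_false, mhi, ma]
      le := fun n => by cases act n <;> simp only [cond_true, cond_false, hle, le_refl]
      summable := by
        have h : Summable ((fun n : ℕ => (hi n.unpair.1 : ℝ) - lo n.unpair.1) ∘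
            ((↑) : {n | act n = true} → ℕ)) :=
          hsum.comp_injective (i := fun n : {n | act n = true} => (n : ℕ).unpair.1)
            actI.injective
        rw [summable_subtype_iff_indicator] at h
        refine h.congr fun n => ?_
        by_cases hn : act n = true
        · simp [Set.indicator, hn]
        · simp [Set.indicator, hn] }
  have hTt : ∀ n, act n = true → T.l n = lo n.unpair.1 ∧ T.r n = hi n.unpair.1 := by
    intro n hn; simp [T, hn]
  have hTf : ∀ n, ¬ act n = true → T.l n = a n ∧ T.r n = a n := by
    intro n hn; simp [T, hn]
  have conv : ∀ ε > 0, ∀ᶠ n in atTop, |(T.l n : ℝ) - γ| < ε ∧ |(T.r n : ℝ) - γ| < ε := by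
    intro ε hε
    have e1 : ∀ᶠ s in atTop, |(a s : ℝ) - γ| < ε / 2 := by
      have := (Metric.tendsto_nhds.1 ta) (ε / 2) (by positivity)
      simpa [Real.dist_eq] using this
    have e2 : ∀ᶠ i in atTop, |(hi i : ℝ) - lo i| < ε / 2 := by
      have := (Metric.tendsto_nhds.1 hsum.tendsto_atTop_zero) (ε / 2) (by positivity)
      simpa [Real.dist_eq] using this
    obtain ⟨M, hM⟩ := eventually_atTop.1 (e1.and e2)
    have hfin : ({n | act n = true ∧ n.unpair.1 < M}).Finite := by
      refine Set.Finite.of_finite_image (f := fun n : ℕ => n.unpair.1) ?_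
        (actI.mono fun n hn => hn.1)
      exact (Set.finite_Iio M).subset (by rintro _ ⟨n, hn, rfl⟩; exact hn.2)
    have e3 : ∀ᶠ n in atTop, n ∉ {n | act n = true ∧ n.unpair.1 < M} := by
      rw [← Nat.cofinite_eq_atTop]; exact hfin.eventually_cofinite_notMem
    filter_upwards [e3, eventually_ge_atTop M] with n hn hnM
    by_cases hA : act n = true
    · have hi' : M ≤ n.unpair.1 := by
        by_contra h; exact hn ⟨hA, not_le.1 h⟩
      obtain ⟨b1, b2, b3⟩ := actP n hA
      have d1 := (hM _ (hi'.trans b1)).1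
      have d2 := (hM _ hi').2
      rw [(hTt n hA).1, (hTt n hA).2]
      have b2' : (lo n.unpair.1 : ℝ) ≤ a n.unpair.2 := by exact_mod_cast b2
      have b3' : (a n.unpair.2 : ℝ) ≤ hi n.unpair.1 := by exact_mod_cast b3
      rw [abs_lt] at d1 d2
      rw [abs_lt, abs_lt]
      constructor <;> constructor <;> linarith [d1.1, d1.2, d2.1, d2.2]
    · rw [(hTf n hA).1, (hTf n hA).2]
      have := (hM n hnM).1
      exact ⟨by linarith, by linarith⟩
  refine ⟨T, converging_of (γ := γ) ?_ ?_, ?_⟩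
  · refine Metric.tendsto_nhds.2 fun ε hε => (conv ε hε).mono fun n h => ?_
    rw [Real.dist_eq]; exact h.1
  · refine Metric.tendsto_nhds.2 fun ε hε => (conv ε hε).mono fun n h => ?_
    rw [Real.dist_eq]; exact h.2
  · have ex : ∀ i, γ ∈ Set.Ioo (lo i : ℝ) (hi i : ℝ) → ∃ s, actp (i, s) = true := by
      intro i hγ
      have : ∃ s, p i s = true := by
        have h1 := ta.eventually (Ioo_mem_nhds hγ.1 hγ.2)
        obtain ⟨s, h2, h3⟩ := (h1.and (eventually_ge_atTop i)).exists
        refine ⟨s, (hp _ _).2 ⟨h3, ?_, ?_⟩⟩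
        · exact_mod_cast h2.1.le
        · exact_mod_cast h2.2.le
      exact ⟨Nat.find this, (hact _ _).2 ⟨Nat.find_spec this, fun t ht => Nat.find_min this ht⟩⟩
    choose! s hs using ex
    unfold SolovayTest.Covers
    rw [Nat.frequently_atTop_iff_infinite] at hcov ⊢
    refine Set.infinite_of_injOn_mapsTo (f := fun i => Nat.pair i (s i)) ?_ ?_ hcov
    · intro i _ j _ h
      exact (Nat.pair_eq_pair.1 h).1
    · intro i hi'
      have hA : act (Nat.pair i (s i)) = true := by
        simp only [act, Nat.unpair_pair]; exact hs i hi'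
      have := hTt _ hA
      simp only [Nat.unpair_pair] at this
      simp only [Set.mem_ofPred_eq, this.1, this.2]
      exact Set.Ioo_subset_Icc_self hi'

def loF (q : ℚ) (i : ℕ) : ℚ := ((pN q * 2 ^ i - q.den : ℕ) : ℚ) / (q.den * 2 ^ i : ℕ)
def hiF (q : ℚ) (i : ℕ) : ℚ :=
  ((min (pN q * 2 ^ i + q.den) (q.den * 2 ^ i) : ℕ) : ℚ) / (q.den * 2 ^ i : ℕ)

theorem pow_comp : Computable fun i : ℕ => 2 ^ i := by
  have : Primrec₂ fun a b : ℕ => a ^ b := Primrec₂.unpaired'.1 Nat.Primrec.pow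
  exact (this.comp (Primrec.const 2) Primrec.id).to_comp

theorem loF_comp {q : ℕ → ℚ} (hq : Computable q) : Computable fun i => loF (q i) i := by
  have c1 := pN_comp.comp hq
  have c2 := den_comp.comp hq
  have m := Primrec.nat_mul.to_comp
  exact div_comp (Primrec.nat_sub.to_comp.comp (m.comp c1 pow_comp) c2) (m.comp c2 pow_comp)
    fun i => Nat.mul_pos (q i).pos (by positivity)

theorem hiF_comp {q : ℕ → ℚ} (hq : Computable q) : Computable fun i => hiF (q i) i := by
  have c1 := pN_comp.comp hq
  have c2 := den_comp.comp hq
  have m := Primrec.nat_mul.to_comp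
  exact div_comp (Primrec.nat_min.to_comp.comp
    (Primrec.nat_add.to_comp.comp (m.comp c1 pow_comp) c2) (m.comp c2 pow_comp))
    (m.comp c2 pow_comp) fun i => Nat.mul_pos (q i).pos (by positivity)

theorem loF_eq {q : ℚ} (h : 0 ≤ q) (i : ℕ) : loF q i = max 0 (q - 1 / 2 ^ i) := by
  have h1 := pN_eq (cN_nonneg h)
  have hd : (0 : ℚ) < q.den := by exact_mod_cast q.pos
  have h2 : (0 : ℚ) < 2 ^ i := by positivity
  have h3 : q - 1 / 2 ^ i = (pN q * 2 ^ i - q.den) / (q.den * 2 ^ i) := by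
    conv_lhs => rw [h1]
    field_simp
  rw [loF, h3]
  rcases le_total q.den (pN q * 2 ^ i) with hc | hc
  · rw [Nat.cast_sub hc, max_eq_right]
    · push_cast; rfl
    · have : (q.den : ℚ) ≤ pN q * 2 ^ i := by exact_mod_cast hc
      exact div_nonneg (by linarith) (by positivity)
  · rw [Nat.sub_eq_zero_of_le hc, max_eq_left]
    · simp
    · have : (pN q * 2 ^ i : ℚ) ≤ q.den := by exact_mod_cast hc
      exact div_nonpos_of_nonpos_of_nonneg (by linarith) (by positivity)

theorem hiF_eq {q : ℚ} (h : 0 ≤ q) (i : ℕ) : hiF q i = min (q + 1 / 2 ^ i) 1 := by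
  have h1 := pN_eq (cN_nonneg h)
  have hd : (0 : ℚ) < q.den := by exact_mod_cast q.pos
  have h2 : (0 : ℚ) < 2 ^ i := by positivity
  have h3 : q + 1 / 2 ^ i = (pN q * 2 ^ i + q.den) / (q.den * 2 ^ i) := by
    conv_lhs => rw [h1]
    field_simp
  rw [hiF, h3, Nat.cast_min, ← min_div_div_right (by positivity)]
  push_cast
  rw [div_self (by positivity)]

theorem forward {γ : ℝ} (hγ : γ ∈ Set.Ioo (0 : ℝ) 1) {a : ℕ → ℚ} (ha : IsCompApprox a γ)
    (T : SolovayTest) (hT : T.Covers γ) : ∃ T : SolovayTest, T.Converging ∧ T.Covers γ := by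
  have el := fun i => loF_eq (T.mem_l i).1 i
  have er := fun i => hiF_eq (T.mem_r i).1 i
  have pw : ∀ i : ℕ, (0 : ℚ) < 1 / 2 ^ i := fun i => by positivity
  have hle : ∀ i, loF (T.l i) i ≤ hiF (T.r i) i := by
    intro i
    rw [el, er]
    have := T.le i; have := (T.mem_l i); have := T.mem_r i; have := pw i
    simp only [Set.mem_Icc] at *
    refine max_le (le_min ?_ ?_) (le_min ?_ ?_) <;> linarith
  refine core (lo := fun i => loF (T.l i) i) (hi := fun i => hiF (T.r i) i) ha
    (loF_comp T.comp_l) (hiF_comp T.comp_r) ?_ ?_ hle ?_ ?_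
  · intro i
    simp only [el]
    have := (T.mem_l i).2; have := pw i
    exact ⟨le_max_left _ _, max_le zero_le_one (by linarith)⟩
  · intro i
    simp only [er]
    have := (T.mem_r i).1; have := pw i
    exact ⟨le_min (by linarith) zero_le_one, min_le_right _ _⟩
  · have hg : Summable fun i : ℕ => ((T.r i : ℝ) - T.l i) + 2 * (1 / 2) ^ i :=
      T.summable.add (summable_geometric_two.mul_left 2)
    refine Summable.of_nonneg_of_le (fun i => ?_) (fun i => ?_) hg
    · have : ((loF (T.l i) i : ℚ) : ℝ) ≤ (hiF (T.r i) i : ℚ) := by exact_mod_cast hle i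
      linarith
    · have : hiF (T.r i) i - loF (T.l i) i ≤ T.r i - T.l i + 2 * (1 / 2) ^ i := by
        have h1 : hiF (T.r i) i ≤ T.r i + 1 / 2 ^ i := by rw [er]; exact min_le_left _ _
        have h2 : T.l i - 1 / 2 ^ i ≤ loF (T.l i) i := by rw [el]; exact le_max_right _ _
        rw [one_div_pow]; linarith
      have h3 := (Rat.cast_le (K := ℝ)).2 this
      push_cast at h3 ⊢
      exact h3
  · refine hT.mono fun i hi => ?_
    have pw' : (0 : ℝ) < 1 / 2 ^ i := by positivity
    simp only [el, er]
    push_cast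
    exact ⟨max_lt hγ.1 (by linarith [hi.1]), lt_min (by linarith [hi.2]) hγ.2⟩

theorem backward {γ : ℝ} (T : SolovayTest) (hc : T.Converging) (hT : T.Covers γ) :
    IsCompApprox T.l γ := by
  obtain ⟨L, hL⟩ := hc
  have hl : Tendsto (fun n => (T.l n : ℝ)) atTop (nhds L) := by
    have h := hL.comp (tendsto_atTop_mono (fun n : ℕ => (by omega : n ≤ 2 * n)) tendsto_id)
    refine h.congr fun n => ?_
    simp [SolovayTest.endpoints]
  have hr : Tendsto (fun n => (T.r n : ℝ)) atTop (nhds L) := by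
    have h := hL.comp (tendsto_atTop_mono (fun n : ℕ => (by omega : n ≤ 2 * n + 1)) tendsto_id)
    refine h.congr fun n => ?_
    have : (2 * n + 1) / 2 = n := by omega
    simp [SolovayTest.endpoints, Nat.add_mod, this]
  have : L = γ := by
    apply le_antisymm
    · exact le_of_tendsto_of_frequently hl (hT.mono fun i h => h.1)
    · exact ge_of_tendsto_of_frequently hr (hT.mono fun i h => h.2)
  subst this
  exact ⟨T.comp_l, T.mem_l, hl⟩

theorem ca_nonrandom_iff_covered_by_converging_test (γ : ℝ)
    (hγ : γ ∈ Set.Ioo (0 : ℝ) 1) :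
    ((∃ a : ℕ → ℚ, IsCompApprox a γ) ∧ ∃ T : SolovayTest, T.Covers γ) ↔
      ∃ T : SolovayTest, T.Converging ∧ T.Covers γ := by
  constructor
  · rintro ⟨⟨a, ha⟩, T, hT⟩
    exact forward hγ ha T hT
  · rintro ⟨T, hc, hT⟩
    exact ⟨⟨T.l, backward T hc hT⟩, T, hT⟩
end

section
/- A real γ ∈ (0,1) is d.c.e. and covered by some Solovay test (i.e., is d.c.e. and not Martin-Löf random) if and only if γ is covered by a d.c.e. Solovay test. -/
open Filter

/-- A Solovay test is d.c.e. if its sequence of endpoints has bounded variation. -/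
def SolovayTest.IsDCE (T : SolovayTest) : Prop :=
  Summable (fun n => |(T.endpoints (n + 1) : ℝ) - (T.endpoints n : ℝ)|)


def ratCode (q : ℚ) : ℕ := @Encodable.encode ℚ Rat.instEncodable q

theorem intEncode_natAbs (z : ℤ) : (Encodable.encode z + 1) / 2 = z.natAbs := by
  have h : Encodable.encode z = Equiv.intEquivNat z := rfl
  rw [h]
  cases z with
  | ofNat n =>
    have : Equiv.intEquivNat (Int.ofNat n) = 2 * n := rfl
    rw [this]; simp; omega
  | negSucc n =>
    have : Equiv.intEquivNat (Int.negSucc n) = 2 * n + 1 := rfl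
    rw [this]; simp; omega

theorem ratCode_eq (q : ℚ) : ratCode q = Nat.pair (Encodable.encode q.num) q.den := rfl

def ratSet (x : ℕ) : Prop := 0 < x.unpair.2 ∧ Nat.gcd ((x.unpair.1 + 1) / 2) x.unpair.2 = 1

instance : DecidablePred ratSet := fun x => by unfold ratSet; infer_instance

theorem ratSet_iff (x : ℕ) : ratSet x ↔ x ∈ Set.range ratCode := by
  constructor
  · rintro ⟨h1, h2⟩
    refine ⟨⟨Equiv.intEquivNat.symm x.unpair.1, x.unpair.2, h1.ne', ?_⟩, ?_⟩
    · rw [← intEncode_natAbs]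
      have : Encodable.encode (Equiv.intEquivNat.symm x.unpair.1) = x.unpair.1 :=
        Equiv.intEquivNat.apply_symm_apply _
      rw [this]; exact h2
    · rw [ratCode_eq]
      have : Encodable.encode (Equiv.intEquivNat.symm x.unpair.1) = x.unpair.1 :=
        Equiv.intEquivNat.apply_symm_apply _
      simp only [this, Nat.pair_unpair]
  · rintro ⟨q, rfl⟩
    rw [ratCode_eq, ratSet]
    simp only [Nat.unpair_pair, intEncode_natAbs]
    exact ⟨q.pos, q.reduced⟩

theorem gcd_findGreatest (m d : ℕ) :
    Nat.findGreatest (fun k => m % k = 0 ∧ d % k = 0) (m + d) = Nat.gcd m d := by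
  rcases Nat.eq_zero_or_pos (m + d) with h | h
  · obtain ⟨rfl, rfl⟩ : m = 0 ∧ d = 0 := by omega
    simp
  · have hg : 0 < Nat.gcd m d := by
      rcases Nat.eq_zero_or_pos m with h' | h'
      · exact Nat.gcd_pos_of_pos_right _ (by omega)
      · exact Nat.gcd_pos_of_pos_left _ h'
    rw [Nat.findGreatest_eq_iff]
    refine ⟨?_, fun _ => ⟨Nat.mod_eq_zero_of_dvd (Nat.gcd_dvd_left _ _), Nat.mod_eq_zero_of_dvd (Nat.gcd_dvd_right _ _)⟩, ?_⟩
    · rcases Nat.eq_zero_or_pos m with h' | h'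
      · subst h'; simp
      · exact (Nat.gcd_le_left _ h').trans (by omega)
    · rintro k hk _ ⟨h1, h2⟩
      exact absurd (Nat.le_of_dvd hg (Nat.dvd_gcd (Nat.dvd_of_mod_eq_zero h1) (Nat.dvd_of_mod_eq_zero h2))) (by omega)

theorem primrec_gcd : Primrec₂ Nat.gcd := by
  have : Primrec (fun p : ℕ × ℕ => Nat.findGreatest (fun k => p.1 % k = 0 ∧ p.2 % k = 0) (p.1 + p.2)) := by
    apply Primrec.nat_findGreatest (p := fun (p : ℕ × ℕ) k => p.1 % k = 0 ∧ p.2 % k = 0)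
    · exact Primrec.nat_add.comp Primrec.fst Primrec.snd
    · exact PrimrecPred.and
        (Primrec.eq.comp (Primrec.nat_mod.comp (Primrec.fst.comp Primrec.fst) Primrec.snd) (Primrec.const 0))
        (Primrec.eq.comp (Primrec.nat_mod.comp (Primrec.snd.comp Primrec.fst) Primrec.snd) (Primrec.const 0))
  exact this.of_eq fun p => gcd_findGreatest p.1 p.2

theorem primrec_ratSet : PrimrecPred ratSet := by
  have h2 : Primrec (fun x : ℕ => x.unpair.2) := Primrec.snd.comp Primrec.unpair
  have h1 : Primrec (fun x : ℕ => (x.unpair.1 + 1) / 2) :=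
    Primrec.nat_div.comp (Primrec.succ.comp (Primrec.fst.comp Primrec.unpair)) (Primrec.const 2)
  exact PrimrecPred.and (Primrec.nat_lt.comp (Primrec.const 0) h2)
    (Primrec.eq.comp (primrec_gcd.comp h1 h2) (Primrec.const 1))

theorem exists_next (x : ℕ) : ∃ m, ratSet (x + m + 1) := by
  have h := Nat.left_le_pair (x + 1) 1
  refine ⟨Nat.pair (x + 1) 1 - (x + 1), ?_⟩
  rw [show x + (Nat.pair (x + 1) 1 - (x + 1)) + 1 = Nat.pair (x + 1) 1 by omega]
  simp [ratSet]

def nextRat (x : ℕ) : ℕ := x + Nat.find (exists_next x) + 1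

theorem computable_nextRat : Computable nextRat := by
  have h : Computable (fun x => Nat.find (exists_next x)) := by
    apply Computable.find (P := fun x m => ratSet (x + m + 1))
    have h' : PrimrecPred (fun p : ℕ × ℕ => ratSet (p.1 + p.2 + 1)) :=
      primrec_ratSet.comp (Primrec.succ.comp (Primrec.nat_add.comp Primrec.fst Primrec.snd))
    obtain ⟨d, hd⟩ := h'
    exact ⟨d, hd.to_comp⟩
  exact Computable.succ.comp ((Primrec.nat_add.to_comp).comp Computable.id h)

theorem computable_ratCode_ofNat : Computable (fun n => ratCode (Denumerable.ofNat ℚ n)) := by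
  let := @Encodable.decidableRangeEncode ℚ Rat.instEncodable
  let : Infinite (Set.range (@Encodable.encode ℚ Rat.instEncodable)) :=
    Infinite.of_injective _ (Equiv.ofInjective _ (@Encodable.encode_injective ℚ Rat.instEncodable)).injective
  have key : ∀ n, ratCode (Denumerable.ofNat ℚ n) =
      (Nat.Subtype.ofNat (Set.range (@Encodable.encode ℚ Rat.instEncodable)) n : ℕ) := by
    intro n
    have h1 : Denumerable.ofNat ℚ n = (@Encodable.equivRangeEncode ℚ Rat.instEncodable).symm
      (Nat.Subtype.ofNat (Set.range (@Encodable.encode ℚ Rat.instEncodable)) n) := rfl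
    rw [h1]
    exact congrArg Subtype.val ((@Encodable.equivRangeEncode ℚ Rat.instEncodable).apply_symm_apply _)
  have : Computable (fun n : ℕ => Nat.rec (motive := fun _ => ℕ) (ratCode (Denumerable.ofNat ℚ 0))
      (fun _ IH => nextRat IH) n) :=
    Computable.nat_rec Computable.id (Computable.const _)
      (computable_nextRat.comp (Computable.snd.comp Computable.snd)).to₂
  refine this.of_eq fun n => ?_
  induction n with
  | zero => rfl
  | succ n ih =>
    simp only [ih]
    rw [key, key]
    show _ = _ + _ + 1
    unfold nextRat
    congr 2
    apply Nat.find_congr'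
    intro m
    exact ratSet_iff _

theorem computable_ratCode : Computable ratCode :=
  (computable_ratCode_ofNat.comp Computable.encode).of_eq fun q =>
    congrArg ratCode (Denumerable.ofNat_encode q)

theorem computable_ratAbs : Computable (fun q : ℚ => q.num.natAbs) := by
  have h1 : Primrec (fun x : ℕ => (x.unpair.1 + 1) / 2) :=
    Primrec.nat_div.comp (Primrec.succ.comp (Primrec.fst.comp Primrec.unpair)) (Primrec.const 2)
  refine (h1.to_comp.comp computable_ratCode).of_eq fun q => ?_
  rw [ratCode_eq]; simp [intEncode_natAbs]

theorem computable_ratDen : Computable (fun q : ℚ => q.den) := by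
  refine ((Computable.snd.comp Computable.unpair).comp computable_ratCode).of_eq fun q => ?_
  rw [ratCode_eq]; simp

/-- comparison, correct on nonnegative rationals -/
def ratLe (p q : ℚ) : Bool := decide (p.num.natAbs * q.den ≤ q.num.natAbs * p.den)

theorem ratLe_iff {p q : ℚ} (hp : 0 ≤ p) (hq : 0 ≤ q) : ratLe p q = true ↔ p ≤ q := by
  have h1 := Rat.num_nonneg.2 hp
  have h2 := Rat.num_nonneg.2 hq
  rw [ratLe, decide_eq_true_iff, Rat.le_iff]
  zify
  rw [abs_of_nonneg h1, abs_of_nonneg h2]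

theorem computable_ratLe : Computable₂ ratLe := by
  have : Computable₂ (fun a b : ℕ => decide (a ≤ b)) := (Primrec.nat_le.decide).to_comp
  exact this.comp
    (Primrec.nat_mul.to_comp.comp (computable_ratAbs.comp Computable.fst) (computable_ratDen.comp Computable.snd))
    (Primrec.nat_mul.to_comp.comp (computable_ratAbs.comp Computable.snd) (computable_ratDen.comp Computable.fst))

def tHit (a l r : ℕ → ℚ) (n : ℕ) : Bool :=
  ratLe (l n.unpair.1) (a n) && ratLe (a n) (r n.unpair.1)

def tPrior (h : ℕ → Bool) (i n : ℕ) : Bool :=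
  Nat.rec (motive := fun _ => Bool) false (fun m b => b || (decide (m.unpair.1 = i) && h m)) n

theorem tPrior_iff (h : ℕ → Bool) (i n : ℕ) :
    tPrior h i n = true ↔ ∃ m < n, m.unpair.1 = i ∧ h m = true := by
  induction n with
  | zero => simp [tPrior]
  | succ n ih =>
    have : tPrior h i (n + 1) = (tPrior h i n || (decide (n.unpair.1 = i) && h n)) := rfl
    rw [this, Bool.or_eq_true, ih, Bool.and_eq_true, decide_eq_true_iff]
    constructor
    · rintro (⟨m, hm, h'⟩ | h')
      · exact ⟨m, by omega, h'⟩
      · exact ⟨n, by omega, h'⟩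
    · rintro ⟨m, hm, h'⟩
      rcases Nat.lt_succ_iff_lt_or_eq.1 hm with h1 | rfl
      · exact Or.inl ⟨m, h1, h'⟩
      · exact Or.inr h'

def tEmit (h : ℕ → Bool) (n : ℕ) : Bool := h n && !(tPrior h n.unpair.1 n)

theorem computable_tHit {a l r : ℕ → ℚ} (ha : Computable a) (hl : Computable l)
    (hr : Computable r) : Computable (tHit a l r) := by
  have hu : Computable (fun n : ℕ => n.unpair.1) := Computable.fst.comp Computable.unpair
  exact Primrec.and.to_comp.comp (computable_ratLe.comp (hl.comp hu) ha)
    (computable_ratLe.comp ha (hr.comp hu))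

theorem computable_tEmit {h : ℕ → Bool} (hh : Computable h) : Computable (tEmit h) := by
  have hu : Computable (fun n : ℕ => n.unpair.1) := Computable.fst.comp Computable.unpair
  have hdec : Computable₂ (fun a b : ℕ => decide (a = b)) := (Primrec.eq (α := ℕ)).decide.to_comp
  have hp : Computable (fun n : ℕ => tPrior h n.unpair.1 n) := by
    refine Computable.nat_rec (f := fun n : ℕ => n) (g := fun _ => false)
      (h := fun (n : ℕ) (p : ℕ × Bool) => p.2 || (decide (p.1.unpair.1 = n.unpair.1) && h p.1))
      Computable.id (Computable.const _) ?_
    refine Computable₂.mk ?_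
    exact Primrec.or.to_comp.comp (Computable.snd.comp Computable.snd)
      (Primrec.and.to_comp.comp
        (hdec.comp (hu.comp (Computable.fst.comp Computable.snd)) (hu.comp Computable.fst))
        (hh.comp (Computable.fst.comp Computable.snd)))
  exact Primrec.and.to_comp.comp hh (Primrec.not.to_comp.comp hp)

theorem tEmit_inj {h : ℕ → Bool} {m n : ℕ} (hm : tEmit h m = true) (hn : tEmit h n = true)
    (he : m.unpair.1 = n.unpair.1) : m = n := by
  simp only [tEmit, Bool.and_eq_true, Bool.not_eq_true', ← Bool.not_eq_true, tPrior_iff] at hm hn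
  rcases lt_trichotomy m n with h1 | h1 | h1
  · exact absurd ⟨m, h1, he, hm.1⟩ hn.2
  · exact h1
  · exact absurd ⟨n, h1, he.symm, hn.1⟩ hm.2

theorem exists_tEmit {h : ℕ → Bool} {i : ℕ} (hex : ∃ n, n.unpair.1 = i ∧ h n = true) :
    ∃ n, n.unpair.1 = i ∧ tEmit h n = true := by
  classical
  refine ⟨Nat.find hex, (Nat.find_spec hex).1, ?_⟩
  simp only [tEmit, Bool.and_eq_true, Bool.not_eq_true', ← Bool.not_eq_true, tPrior_iff]
  refine ⟨(Nat.find_spec hex).2, ?_⟩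
  rintro ⟨m, hm, h1, h2⟩
  exact Nat.find_min hex hm ⟨h1.trans (Nat.find_spec hex).1, h2⟩

theorem endpoints_even (T : SolovayTest) (n : ℕ) : T.endpoints (2 * n) = T.l n := by
  simp [SolovayTest.endpoints]

theorem endpoints_odd (T : SolovayTest) (n : ℕ) : T.endpoints (2 * n + 1) = T.r n := by
  have h1 : (2 * n + 1) % 2 = 1 := by omega
  have h2 : (2 * n + 1) / 2 = n := by omega
  simp [SolovayTest.endpoints, h1, h2]

theorem summable_of_evens_odds {f : ℕ → ℝ} (he : Summable (fun n => f (2 * n)))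
    (ho : Summable (fun n => f (2 * n + 1))) : Summable f :=
  (he.hasSum.even_add_odd ho.hasSum).summable

theorem dce_of_test {γ : ℝ} {T : SolovayTest} (hd : T.IsDCE) (hc : T.Covers γ) :
    IsDCEApprox T.l γ := by
  have hv : Summable (fun s => |(T.l (s + 1) : ℝ) - (T.l s : ℝ)|) := by
    have h0 := hd.comp_injective (i := fun n : ℕ => 2 * n) (fun a b h => by simpa using h)
    have h1 := hd.comp_injective (i := fun n : ℕ => 2 * n + 1) (fun a b h => by simpa using h)
    refine Summable.of_nonneg_of_le (fun _ => abs_nonneg _) (fun n => ?_) (h1.add h0)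
    simp only [Function.comp]
    rw [show 2 * n + 1 + 1 = 2 * (n + 1) by ring, endpoints_even, endpoints_odd, endpoints_even]
    exact abs_sub_le _ _ _
  refine ⟨⟨T.comp_l, T.mem_l, ?_⟩, hv⟩
  have hcau : CauchySeq (fun s => (T.l s : ℝ)) := by
    apply cauchySeq_of_summable_dist
    refine hv.congr fun n => ?_
    rw [dist_comm, Real.dist_eq]
  obtain ⟨x, hx⟩ := cauchySeq_tendsto_of_complete hcau
  have hlen := T.summable.tendsto_atTop_zero
  have h2 : Tendsto (fun s => |(T.l s : ℝ) - γ|) atTop (nhds |x - γ|) := (hx.sub_const γ).abs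
  have hxg : x = γ := by
    by_contra hne
    have hpos : 0 < |x - γ| := abs_pos.2 (sub_ne_zero.2 hne)
    have hev := hlen.eventually_lt h2 hpos
    obtain ⟨n, hn1, hn2⟩ := (hc.and_eventually hev).exists
    rw [abs_sub_comm, abs_of_nonneg (by linarith [hn1.1])] at hn2
    linarith [hn1.2]
  exact hxg ▸ hx

theorem test_of_dce {γ : ℝ} {a : ℕ → ℚ} (ha : IsDCEApprox a γ) {T : SolovayTest}
    (hc : T.Covers γ) (hirr : ∀ q : ℚ, γ ≠ q) : ∃ T' : SolovayTest, T'.IsDCE ∧ T'.Covers γ := by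
  obtain ⟨⟨hcomp, hmem, hlim⟩, hvar⟩ := ha
  set h := tHit a T.l T.r with hh
  have hhit : ∀ n, h n = true ↔ T.l n.unpair.1 ≤ a n ∧ a n ≤ T.r n.unpair.1 := by
    intro n
    rw [hh, tHit, Bool.and_eq_true, ratLe_iff (T.mem_l _).1 (hmem _).1,
      ratLe_iff (hmem _).1 (T.mem_r _).1]
  have hemit : ∀ n, tEmit h n = true → T.l n.unpair.1 ≤ a n ∧ a n ≤ T.r n.unpair.1 := by
    intro n hn
    rw [tEmit, Bool.and_eq_true] at hn
    exact (hhit n).1 hn.1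
  have hu : Computable (fun n : ℕ => n.unpair.1) := Computable.fst.comp Computable.unpair
  have hec : Computable (tEmit h) := computable_tEmit (computable_tHit hcomp T.comp_l T.comp_r)
  let L : ℕ → ℚ := fun n => cond (tEmit h n) (T.l n.unpair.1) (a n)
  let R : ℕ → ℚ := fun n => cond (tEmit h n) (T.r n.unpair.1) (a n)
  have hLa : ∀ n, L n ≤ a n := by
    intro n
    cases hE : tEmit h n
    · simp [L, hE]
    · simpa [L, hE] using (hemit n hE).1
  have haR : ∀ n, a n ≤ R n := by
    intro n
    cases hE : tEmit h n
    · simp [R, hE]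
    · simpa [R, hE] using (hemit n hE).2
  have hsum : Summable (fun n => (R n : ℝ) - (L n : ℝ)) := by
    let s : Set ℕ := {n | tEmit h n = true}
    have h1 : Summable ((fun n => (R n : ℝ) - (L n : ℝ)) ∘ (Subtype.val : s → ℕ)) := by
      have := T.summable.comp_injective (i := fun n : s => (n : ℕ).unpair.1)
        (fun m n he => Subtype.ext (tEmit_inj m.2 n.2 he))
      refine this.congr fun n => ?_
      have hE : tEmit h n = true := n.2
      simp [L, R, hE]
    rw [summable_subtype_iff_indicator] at h1
    refine h1.congr fun n => ?_
    by_cases hE : tEmit h n = true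
    · rw [Set.indicator_of_mem (show n ∈ s from hE)]
    · rw [Set.indicator_of_notMem (show n ∉ s from hE)]
      simp [L, R, hE]
  let T' : SolovayTest :=
    { l := L
      r := R
      comp_l := Computable.cond hec (T.comp_l.comp hu) hcomp
      comp_r := Computable.cond hec (T.comp_r.comp hu) hcomp
      mem_l := fun n => by
        cases hE : tEmit h n
        · simpa [L, hE] using hmem n
        · simpa [L, hE] using T.mem_l n.unpair.1
      mem_r := fun n => by
        cases hE : tEmit h n
        · simpa [R, hE] using hmem n
        · simpa [R, hE] using T.mem_r n.unpair.1
      le := fun n => (hLa n).trans (haR n)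
      summable := hsum }
  refine ⟨T', ?_, ?_⟩
  · have he : Summable (fun n => |(T'.endpoints (2 * n + 1) : ℝ) - (T'.endpoints (2 * n) : ℝ)|) := by
      refine hsum.congr fun n => ?_
      rw [endpoints_even, endpoints_odd, abs_of_nonneg]
      have : (L n : ℝ) ≤ R n := by exact_mod_cast (hLa n).trans (haR n)
      exact sub_nonneg.2 this
    have ho : Summable
        (fun n => |(T'.endpoints (2 * n + 1 + 1) : ℝ) - (T'.endpoints (2 * n + 1) : ℝ)|) := by
      have hs1 := (summable_nat_add_iff 1).2 hsum
      refine Summable.of_nonneg_of_le (fun _ => abs_nonneg _) (fun n => ?_) ((hs1.add hvar).add hsum)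
      rw [show 2 * n + 1 + 1 = 2 * (n + 1) by ring, endpoints_even, endpoints_odd]
      have e1 : (L n : ℝ) ≤ a n := by exact_mod_cast hLa n
      have e2 : (a n : ℝ) ≤ R n := by exact_mod_cast haR n
      have e3 : (L (n + 1) : ℝ) ≤ a (n + 1) := by exact_mod_cast hLa (n + 1)
      have e4 : (a (n + 1) : ℝ) ≤ R (n + 1) := by exact_mod_cast haR (n + 1)
      have e5 := le_abs_self ((a (n + 1) : ℝ) - a n)
      have e6 := neg_abs_le ((a (n + 1) : ℝ) - a n)
      show |(L (n + 1) : ℝ) - R n| ≤ _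
      rw [abs_le]
      constructor <;> linarith
    exact summable_of_evens_odds (f := fun n => |(T'.endpoints (n + 1) : ℝ) - (T'.endpoints n : ℝ)|) he ho
  · rw [SolovayTest.Covers, Nat.frequently_atTop_iff_infinite] at hc ⊢
    refine Set.Infinite.of_image (fun n : ℕ => n.unpair.1) (hc.mono ?_)
    rintro i ⟨h1, h2⟩
    have h1' := lt_of_le_of_ne h1 (hirr _).symm
    have h2' := lt_of_le_of_ne h2 (hirr _)
    obtain ⟨N, hN⟩ := eventually_atTop.1
      ((hlim.eventually_const_lt h1').and (hlim.eventually_lt_const h2'))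
    obtain ⟨hN1, hN2⟩ := hN (Nat.pair i N) (Nat.right_le_pair i N)
    have hex : ∃ n, n.unpair.1 = i ∧ h n = true := by
      refine ⟨Nat.pair i N, by simp, ?_⟩
      rw [hhit]
      simp only [Nat.unpair_pair]
      exact ⟨by exact_mod_cast hN1.le, by exact_mod_cast hN2.le⟩
    obtain ⟨n, hn, hE⟩ := exists_tEmit hex
    refine ⟨n, ?_, hn⟩
    have hL : T'.l n = T.l i := by
      show L n = _
      simp [L, hE, hn]
    have hR : T'.r n = T.r i := by
      show R n = _
      simp [R, hE, hn]
    simp only [Set.mem_setOf_eq, hL, hR]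
    exact ⟨h1, h2⟩

theorem dce_nonrandom_iff_covered_by_dce_test (γ : ℝ)
    (hγ : γ ∈ Set.Ioo (0 : ℝ) 1) :
    ((∃ a : ℕ → ℚ, IsDCEApprox a γ) ∧ ∃ T : SolovayTest, T.Covers γ) ↔
      ∃ T : SolovayTest, T.IsDCE ∧ T.Covers γ := by
  constructor
  · rintro ⟨⟨a, ha⟩, T, hc⟩
    by_cases hq : ∃ q : ℚ, γ = q
    · obtain ⟨q, rfl⟩ := hq
      have hm : q ∈ Set.Icc (0 : ℚ) 1 :=
        ⟨by exact_mod_cast hγ.1.le, by exact_mod_cast hγ.2.le⟩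
      refine ⟨⟨fun _ => q, fun _ => q, Computable.const q, Computable.const q, fun _ => hm,
        fun _ => hm, fun _ => le_rfl, by simp⟩, ?_, ?_⟩
      · simp [SolovayTest.IsDCE, SolovayTest.endpoints, summable_zero]
      · simp only [SolovayTest.Covers, Set.Icc_self, Set.mem_singleton_iff]
        exact Frequently.of_forall fun _ => trivial
    · push Not at hq
      exact test_of_dce ha hc hq
  · rintro ⟨T, hd, hc⟩
    exact ⟨⟨T.l, dce_of_test hd hc⟩, T, hc⟩
end

section
/- A real γ ∈ (0,1) is left-c.e. and covered by some Solovay test (i.e., is left-c.e. and not Martin-Löf random) if and only if γ is covered by a left-c.e. Solovay test. -/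
open Filter

namespace LceAux
open Encodable

/-- raw code of a rational -/
def e (q : ℚ) : ℕ := @Encodable.encode ℚ Rat.instEncodable q

theorem enc_int (z : ℤ) : encode z = if 0 ≤ z then 2 * z.toNat else 2 * z.natAbs - 1 := by
  rcases z with n | n
  · change Equiv.intEquivNat (Int.ofNat n) = _
    change Nat.bit false n = _
    simp
  · change Equiv.intEquivNat (Int.negSucc n) = _
    simp [Equiv.intEquivNat, Equiv.intEquivNatSumNat, Equiv.natSumNatEquivNat, Equiv.boolProdNatEquivNat]
    omega

theorem e_eq (q : ℚ) : e q = Nat.pair (encode q.num) q.den := rfl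

def absU (u : ℕ) : ℕ := (u + 1) / 2
def posU (u : ℕ) : ℕ := if u % 2 = 0 then u / 2 else 0
def negU (u : ℕ) : ℕ := if u % 2 = 0 then 0 else (u + 1) / 2

theorem absU_enc (z : ℤ) : absU (encode z) = z.natAbs := by
  rw [enc_int, absU]; split_ifs <;> omega
theorem pos_neg_enc (z : ℤ) : (posU (encode z) : ℤ) - negU (encode z) = z := by
  rw [enc_int, posU, negU]; split_ifs <;> omega

theorem mem_S (n : ℕ) : n ∈ Set.range e ↔
    0 < n.unpair.2 ∧ Nat.findGreatest (fun k => absU n.unpair.1 % k = 0 ∧ n.unpair.2 % k = 0) n.unpair.2 ≤ 1 := by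
  have key : ∀ a d : ℕ, 0 < d →
      (Nat.findGreatest (fun k => a % k = 0 ∧ d % k = 0) d ≤ 1 ↔ a.Coprime d) := by
    intro a d hd
    have : Nat.findGreatest (fun k => a % k = 0 ∧ d % k = 0) d = a.gcd d := by
      rw [Nat.findGreatest_eq_iff]
      refine ⟨Nat.le_of_dvd hd (Nat.gcd_dvd_right _ _), fun _ => ?_, ?_⟩
      · exact ⟨Nat.mod_eq_zero_of_dvd (Nat.gcd_dvd_left _ _),
          Nat.mod_eq_zero_of_dvd (Nat.gcd_dvd_right _ _)⟩
      · rintro k hk _ ⟨h1, h2⟩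
        have := Nat.le_of_dvd (Nat.gcd_pos_of_pos_right a hd)
          (Nat.dvd_gcd (Nat.dvd_of_mod_eq_zero h1) (Nat.dvd_of_mod_eq_zero h2))
        omega
    rw [this, Nat.Coprime]
    have := Nat.gcd_pos_of_pos_right a hd
    omega
  constructor
  · rintro ⟨q, rfl⟩
    rw [e_eq]
    simp only [Nat.unpair_pair, absU_enc]
    exact ⟨q.den_pos, (key _ _ q.den_pos).2 q.reduced⟩
  · rintro ⟨h1, h2⟩
    rw [key _ _ h1] at h2
    have hz : encode (Denumerable.ofNat ℤ n.unpair.1) = n.unpair.1 := Denumerable.encode_ofNat _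
    rw [← hz, absU_enc] at h2
    refine ⟨⟨Denumerable.ofNat ℤ n.unpair.1, n.unpair.2, h1.ne', h2⟩, ?_⟩
    rw [e_eq]
    change Nat.pair (encode (Denumerable.ofNat ℤ n.unpair.1)) n.unpair.2 = n
    rw [hz, Nat.pair_unpair]

theorem prim_absU : Primrec absU :=
  Primrec.nat_div.comp (Primrec.succ) (Primrec.const 2)
theorem prim_even : PrimrecPred fun u : ℕ => u % 2 = 0 :=
  Primrec.eq.comp (Primrec.nat_mod.comp Primrec.id (Primrec.const 2)) (Primrec.const 0)
theorem prim_posU : Primrec posU :=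
  Primrec.ite prim_even (Primrec.nat_div.comp Primrec.id (Primrec.const 2)) (Primrec.const 0)
theorem prim_negU : Primrec negU :=
  Primrec.ite prim_even (Primrec.const 0) prim_absU

theorem prim_S : PrimrecPred fun n => n ∈ Set.range e := by
  refine PrimrecPred.of_eq ?_ fun n => (mem_S n).symm
  have hu1 : Primrec fun n : ℕ => n.unpair.1 := Primrec.fst.comp Primrec.unpair
  have hu2 : Primrec fun n : ℕ => n.unpair.2 := Primrec.snd.comp Primrec.unpair
  refine (Primrec.nat_lt.comp (Primrec.const 0) hu2).and ?_
  refine Primrec.nat_le.comp (Primrec.nat_findGreatest (p := fun n k => absU n.unpair.1 % k = 0 ∧ n.unpair.2 % k = 0) hu2 ?_) (Primrec.const 1)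
  refine PrimrecPred.and ?_ ?_
  · exact Primrec.eq.comp (Primrec.nat_mod.comp (prim_absU.comp (hu1.comp Primrec.fst)) Primrec.snd) (Primrec.const 0)
  · exact Primrec.eq.comp (Primrec.nat_mod.comp (hu2.comp Primrec.fst) Primrec.snd) (Primrec.const 0)

theorem ofNat_eq : ∃ (h1 : DecidablePred (· ∈ Set.range e)) (h2 : Infinite (Set.range e)),
    ∀ n, e (Denumerable.ofNat ℚ n) = (@Nat.Subtype.ofNat (Set.range e) h1 h2 n : ℕ) := by
  refine ⟨@decidableRangeEncode ℚ Rat.instEncodable, Infinite.of_injective _ (Equiv.ofInjective _ (@encode_injective ℚ Rat.instEncodable)).injective, fun n => ?_⟩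
  let _ : DecidablePred (· ∈ Set.range e) := @decidableRangeEncode ℚ Rat.instEncodable
  have : Infinite (Set.range e) := Infinite.of_injective _ (Equiv.ofInjective _ (@encode_injective ℚ Rat.instEncodable)).injective
  have : Denumerable.ofNat ℚ n = (@equivRangeEncode ℚ Rat.instEncodable).symm (Nat.Subtype.ofNat (Set.range e) n) := by
    let _ := Nat.Subtype.denumerable (Set.range e)
    exact Denumerable.ofEquiv_ofNat (Set.range e) (@equivRangeEncode ℚ Rat.instEncodable) n
  rw [this]
  have h2 := (@equivRangeEncode ℚ Rat.instEncodable).apply_symm_apply (Nat.Subtype.ofNat (Set.range e) n)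
  exact congrArg Subtype.val h2

theorem comp_e : Computable e := by
  obtain ⟨h1, h2, h⟩ := ofNat_eq
  have hex : ∀ x, ∃ m, x ∈ Set.range e → x + m + 1 ∈ Set.range e := by
    intro x
    by_cases hx : x ∈ Set.range e
    · obtain ⟨m, hm⟩ := Nat.Subtype.exists_succ (s := Set.range e) ⟨x, hx⟩
      exact ⟨m, fun _ => hm⟩
    · exact ⟨0, fun h => absurd h hx⟩
  have hP : ComputablePred fun p : ℕ × ℕ => (p.1 ∈ Set.range e → p.1 + p.2 + 1 ∈ Set.range e) := by
    have : PrimrecPred fun p : ℕ × ℕ => (p.1 ∉ Set.range e ∨ p.1 + p.2 + 1 ∈ Set.range e) := by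
      refine PrimrecPred.or (PrimrecPred.not (prim_S.comp Primrec.fst)) ?_
      exact prim_S.comp (Primrec.succ.comp (Primrec.nat_add.comp Primrec.fst Primrec.snd))
    obtain ⟨d, hd⟩ := this
    exact ComputablePred.of_eq ⟨d, hd.to_comp⟩ fun _ => by tauto
  classical
  have hfind := Computable.find (P := fun x m => x ∈ Set.range e → x + m + 1 ∈ Set.range e) hP hex
  have hF : Computable fun n => e (Denumerable.ofNat ℚ n) := by
    have := Computable.nat_rec (α := ℕ) (σ := ℕ) (f := id)
      (g := fun _ => e (Denumerable.ofNat ℚ 0))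
      (h := fun _ p => p.2 + Nat.find (hex p.2) + 1) Computable.id (Computable.const _)
      (by
        have hs : Computable fun a : ℕ × (ℕ × ℕ) => a.2.2 := Computable.snd.comp Computable.snd
        exact Computable.succ.comp (Primrec.nat_add.to_comp.comp hs (hfind.comp hs)))
    refine this.of_eq fun n => ?_
    induction n with
    | zero => rfl
    | succ n ih =>
      simp only [id] at ih ⊢
      rw [ih, h (n+1), h n]
      change _ = (Nat.Subtype.ofNat (Set.range e) n : ℕ) + Nat.find _ + 1
      congr 2
      apply Nat.find_congr' 
      intro m
      have := (Nat.Subtype.ofNat (Set.range e) n).2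
      tauto
  refine (hF.comp Computable.encode).of_eq fun q => ?_
  exact congrArg e (Denumerable.ofNat_encode q)

theorem le_iff (p q : ℚ) : p ≤ q ↔
    posU (e p).unpair.1 * (e q).unpair.2 + negU (e q).unpair.1 * (e p).unpair.2 ≤
    posU (e q).unpair.1 * (e p).unpair.2 + negU (e p).unpair.1 * (e q).unpair.2 := by
  rw [Rat.le_iff, e_eq, e_eq]
  simp only [Nat.unpair_pair]
  have h1 := pos_neg_enc p.num
  have h2 := pos_neg_enc q.num
  zify
  generalize (posU (encode p.num) : ℤ) = a at *
  generalize (negU (encode p.num) : ℤ) = b at *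
  generalize (posU (encode q.num) : ℤ) = c at *
  generalize (negU (encode q.num) : ℤ) = d at *
  rw [← h1, ← h2]
  constructor <;> intro h <;> linarith

theorem comp_le : ComputablePred fun x : ℚ × ℚ => x.1 ≤ x.2 := by
  let R : ℕ × ℕ → Prop := fun x => posU x.1.unpair.1 * x.2.unpair.2 + negU x.2.unpair.1 * x.1.unpair.2 ≤
    posU x.2.unpair.1 * x.1.unpair.2 + negU x.1.unpair.1 * x.2.unpair.2
  have hR : PrimrecPred R := by
    have hu1 : Primrec fun n : ℕ => n.unpair.1 := Primrec.fst.comp Primrec.unpair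
    have hu2 : Primrec fun n : ℕ => n.unpair.2 := Primrec.snd.comp Primrec.unpair
    have A := @Primrec.fst ℕ ℕ _ _
    have B := @Primrec.snd ℕ ℕ _ _
    refine Primrec.nat_le.comp (Primrec.nat_add.comp (Primrec.nat_mul.comp ?_ ?_) (Primrec.nat_mul.comp ?_ ?_))
      (Primrec.nat_add.comp (Primrec.nat_mul.comp ?_ ?_) (Primrec.nat_mul.comp ?_ ?_))
    · exact prim_posU.comp (hu1.comp A)
    · exact hu2.comp B
    · exact prim_negU.comp (hu1.comp B)
    · exact hu2.comp A
    · exact prim_posU.comp (hu1.comp B)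
    · exact hu2.comp A
    · exact prim_negU.comp (hu1.comp A)
    · exact hu2.comp B
  obtain ⟨d, hd⟩ := hR
  have : ComputablePred fun x : ℚ × ℚ => R (e x.1, e x.2) :=
    ⟨fun x => d _, hd.to_comp.comp ((comp_e.comp Computable.fst).pair (comp_e.comp Computable.snd))⟩
  exact this.of_eq fun x => (le_iff _ _).symm

theorem comp_ble : Computable₂ fun x y : ℚ => decide (x ≤ y) := by
  obtain ⟨d, hd⟩ := comp_le
  refine Computable.of_eq hd fun x => ?_
  simp

/-- right endpoints of the new test -/
def newR (a l r : ℕ → ℚ) (n : ℕ) : ℚ :=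
  if (l n.unpair.1 ≤ a n ∧ a n ≤ r n.unpair.1) ∧
      (n.unpair.2 = 0 ∨ ¬ l n.unpair.1 ≤ a (Nat.pair n.unpair.1 (n.unpair.2 - 1)))
  then r n.unpair.1 else a n

theorem comp_newR {a l r : ℕ → ℚ} (ha : Computable a) (hl : Computable l) (hr : Computable r) :
    Computable (newR a l r) := by
  have u : Computable Nat.unpair := Primrec.unpair.to_comp
  have u1 : Computable fun n : ℕ => n.unpair.1 := Computable.fst.comp u
  have u2 : Computable fun n : ℕ => n.unpair.2 := Computable.snd.comp u
  have hpair : Computable fun n : ℕ => Nat.pair n.unpair.1 (n.unpair.2 - 1) :=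
    Primrec₂.natPair.to_comp.comp u1 (Computable.pred.comp u2)
  have c1 := comp_ble.comp (hl.comp u1) ha
  have c2 := comp_ble.comp ha (hr.comp u1)
  have c3 : Computable fun n : ℕ => decide (n.unpair.2 = 0) := by
    obtain ⟨d, hd⟩ := Primrec.eq.comp (Primrec.snd.comp Primrec.unpair) (Primrec.const (α := ℕ) 0)
    exact hd.to_comp.of_eq fun n => by simp
  have c4 := Primrec.not.to_comp.comp (comp_ble.comp (hl.comp u1) (ha.comp hpair))
  refine (Computable.cond (Primrec.and.to_comp.comp (Primrec.and.to_comp.comp c1 c2)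
    (Primrec.or.to_comp.comp c3 c4)) (hr.comp u1) ha).of_eq fun n => ?_
  simp only [newR, ← Bool.decide_and, ← Bool.decide_or, ← decide_not, Bool.cond_decide]

theorem forward (γ : ℝ) (hγ : γ ∈ Set.Ioo (0 : ℝ) 1) (a : ℕ → ℚ) (ha : IsCompApprox a γ)
    (hm : Monotone a) (T : SolovayTest) (hT : T.Covers γ) :
    ∃ T : SolovayTest, Monotone T.l ∧ T.Covers γ := by
  by_cases hq : ∃ q : ℚ, (q : ℝ) = γ
  · obtain ⟨q, rfl⟩ := hq
    have h0 : q ∈ Set.Icc (0 : ℚ) 1 := ⟨by exact_mod_cast hγ.1.le, by exact_mod_cast hγ.2.le⟩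
    exact ⟨⟨fun _ => q, fun _ => q, Computable.const _, Computable.const _, fun _ => h0,
      fun _ => h0, fun _ => le_rfl, by simp⟩, monotone_const,
      Frequently.of_forall fun _ => by simp⟩
  obtain ⟨hac, ha01, hat⟩ := ha
  have hmR : Monotone fun s => (a s : ℝ) := fun i j h => Rat.cast_le.2 (hm h)
  have hle : ∀ s, (a s : ℝ) ≤ γ := fun s => hmR.ge_of_tendsto hat s
  have hnonneg : ∀ n, a n ≤ newR a T.l T.r n := by
    intro n
    unfold newR
    split_ifs with h
    · exact h.1.2
    · exact le_rfl
  have hsum : Summable fun n => ((newR a T.l T.r n : ℚ) : ℝ) - (a n : ℝ) := by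
    have hnn : ∀ n, 0 ≤ ((newR a T.l T.r n : ℚ) : ℝ) - (a n : ℝ) := fun n =>
      sub_nonneg.2 (by exact_mod_cast hnonneg n)
    rw [← Nat.pairEquiv.summable_iff]
    -- for each `i` there is `k₀` outside which the term vanishes
    have hk : ∀ i, ∃ k₀, ∀ k ≠ k₀, newR a T.l T.r (Nat.pair i k) = a (Nat.pair i k) := by
      intro i
      by_cases hex : ∃ k, T.l i ≤ a (Nat.pair i k)
      · refine ⟨Nat.find hex, fun k hk => ?_⟩
        unfold newR
        rw [if_neg]
        simp only [Nat.unpair_pair]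
        rintro ⟨⟨h1, -⟩, h3⟩
        have hlt : Nat.find hex < k := lt_of_le_of_ne (Nat.find_min' hex h1) hk.symm
        rcases h3 with h3 | h3
        · omega
        · exact h3 ((Nat.find_spec hex).trans (hm (by
            rcases (show Nat.find hex ≤ k - 1 by omega).eq_or_lt with h | h
            · rw [h]
            · exact (Nat.pair_lt_pair_right i h).le)))
      · refine ⟨0, fun k _ => ?_⟩
        unfold newR
        rw [if_neg]
        simp only [Nat.unpair_pair]
        rintro ⟨⟨h1, -⟩, -⟩
        exact hex ⟨k, h1⟩
    choose k₀ hk₀ using hk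
    have hb : ∀ i k, ((newR a T.l T.r (Nat.pair i k) : ℚ) : ℝ) - (a (Nat.pair i k) : ℝ)
        ≤ (T.r i : ℝ) - T.l i := by
      intro i k
      have : newR a T.l T.r (Nat.pair i k) - a (Nat.pair i k) ≤ T.r i - T.l i := by
        have := T.le i
        unfold newR
        simp only [Nat.unpair_pair]
        split_ifs with h
        · linarith [h.1.1]
        · linarith
      exact_mod_cast this
    have hz : ∀ i, ∀ k ≠ k₀ i,
        ((newR a T.l T.r (Nat.pair i k) : ℚ) : ℝ) - (a (Nat.pair i k) : ℝ) = 0 := by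
      intro i k h
      rw [hk₀ i k h, sub_self]
    refine (summable_prod_of_nonneg (fun p => hnn (Nat.pairEquiv p))).2 ?_
    refine ⟨fun i => summable_of_ne_finset_zero (s := {k₀ i}) fun k h => hz i k (by simpa using h), ?_⟩
    refine Summable.of_nonneg_of_le (fun i => tsum_nonneg fun k => hnn _) (fun i => ?_) T.summable
    exact (tsum_eq_single (k₀ i) fun k h => hz i k h).trans_le (hb i _)
  refine ⟨⟨a, newR a T.l T.r, hac, comp_newR hac T.comp_l T.comp_r, ha01, fun n => ?_, hnonneg,
    hsum⟩, hm, ?_⟩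
  · unfold newR
    split_ifs
    · exact T.mem_r _
    · exact ha01 _
  · rw [SolovayTest.Covers, frequently_atTop]
    intro N
    obtain ⟨i, hi, hi1, hi2⟩ := (frequently_atTop.1 hT) N
    have hlt : (T.l i : ℝ) < γ := lt_of_le_of_ne hi1 fun h => hq ⟨_, h⟩
    have hex : ∃ k, T.l i ≤ a (Nat.pair i k) := by
      obtain ⟨s, hs⟩ := (hat.eventually (lt_mem_nhds hlt)).exists
      have hs' : T.l i < a s := by exact_mod_cast hs
      exact ⟨s, hs'.le.trans (hm (Nat.right_le_pair i s))⟩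
    refine ⟨Nat.pair i (Nat.find hex), hi.trans (Nat.left_le_pair _ _), hle _, ?_⟩
    have hr : newR a T.l T.r (Nat.pair i (Nat.find hex)) = T.r i := by
      unfold newR
      rw [if_pos]
      · simp
      · simp only [Nat.unpair_pair]
        refine ⟨⟨Nat.find_spec hex, by exact_mod_cast (hle _).trans hi2⟩, ?_⟩
        rcases Nat.eq_zero_or_pos (Nat.find hex) with h | h
        · exact Or.inl h
        · exact Or.inr (Nat.find_min hex (by omega))
    change γ ≤ ((newR a T.l T.r (Nat.pair i (Nat.find hex)) : ℚ) : ℝ)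
    rw [hr]
    exact hi2

theorem backward (γ : ℝ) (T : SolovayTest) (hm : Monotone T.l) (hT : T.Covers γ) :
    IsCompApprox T.l γ := by
  refine ⟨T.comp_l, T.mem_l, ?_⟩
  have hmR : Monotone fun s => (T.l s : ℝ) := fun i j h => Rat.cast_le.2 (hm h)
  have hle : ∀ s, (T.l s : ℝ) ≤ γ := by
    intro s
    obtain ⟨i, hi, h, -⟩ := (frequently_atTop.1 hT) s
    exact (hmR hi).trans h
  have h0 := T.summable.tendsto_atTop_zero
  refine tendsto_order.2 ⟨fun x hx => ?_, fun x hx => Eventually.of_forall fun s => (hle s).trans_lt hx⟩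
  have h1 := h0.eventually (gt_mem_nhds (sub_pos.2 hx))
  obtain ⟨i, ⟨h2, h3⟩, h4⟩ := (hT.and_eventually h1).exists
  filter_upwards [eventually_ge_atTop i] with s hs
  have := hmR hs
  simp only at this
  linarith

end LceAux

theorem lce_nonrandom_iff_covered_by_lce_test (γ : ℝ)
    (hγ : γ ∈ Set.Ioo (0 : ℝ) 1) :
    ((∃ a : ℕ → ℚ, IsCompApprox a γ ∧ Monotone a) ∧ ∃ T : SolovayTest, T.Covers γ) ↔
      ∃ T : SolovayTest, Monotone T.l ∧ T.Covers γ := by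
  constructor
  · rintro ⟨⟨a, ha, hm⟩, T, hT⟩
    exact LceAux.forward γ hγ a ha hm T hT
  · rintro ⟨T, hm, hT⟩
    exact ⟨⟨T.l, LceAux.backward γ T hm hT, hm⟩, T, hT⟩
end

section
/- A real α ∈ (0,1) is left-c.e. speedable if and only if α is covered by a Solovay test that has bounded increments, i.e., a Solovay test {[ℓ_i, r_i]} for which there is a rational d > 0 with ℓ_{i+1} ≥ ℓ_i + d(r_i − ℓ_i) for all i. -/
open Filter

namespace LceAux

theorem computable_find {β : Type*} [Primcodable β] {p : β → ℕ → Bool} (hp : Computable₂ p)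
    (h : ∀ a, ∃ n, p a n = true) : Computable (fun a => Nat.find (h a)) := by
  have h1 : Partrec (fun a => Nat.rfind (fun n => Part.some (p a n))) := Partrec.rfind hp.partrec₂
  refine Partrec.of_eq h1 fun a => ?_
  refine Part.eq_some_iff.2 (Nat.mem_rfind.2 ?_)
  refine ⟨?_, fun {m} hm => ?_⟩
  · have := Nat.find_spec (h a)
    exact Part.mem_some_iff.2 this.symm
  · have := Nat.find_min (h a) hm
    simp at this
    exact Part.mem_some_iff.2 this.symm

/-- the "raw" code of a rational -/
def raw (q : ℚ) : ℕ := @Encodable.encode ℚ Rat.instEncodable q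

theorem raw_eq (q : ℚ) : raw q = Nat.pair (Equiv.intEquivNat q.num) q.den := rfl

def rawPred (n : ℕ) : Prop :=
  0 < n.unpair.2 ∧ (Equiv.intEquivNat.symm n.unpair.1).natAbs.Coprime n.unpair.2

instance : DecidablePred rawPred := fun n => by unfold rawPred; infer_instance

theorem range_raw (n : ℕ) : n ∈ Set.range raw ↔ rawPred n := by
  constructor
  · rintro ⟨q, rfl⟩
    simpa [rawPred, raw_eq, q.den_pos] using q.reduced
  · rintro ⟨h1, h2⟩
    refine ⟨⟨_, _, h1.ne', h2⟩, ?_⟩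
    simp [raw_eq]

/-- natAbs in terms of the integer code -/
def absCode (n : ℕ) : ℕ := (n + 1) / 2

theorem absCode_eq (z : ℤ) : absCode (Equiv.intEquivNat z) = z.natAbs := by
  unfold absCode
  cases z with
  | ofNat n => show (2 * n + 1) / 2 = n; omega
  | negSucc n => show (2 * n + 1 + 1) / 2 = n + 1; omega

theorem absCode_primrec : Primrec absCode :=
  Primrec.nat_div.comp (Primrec.nat_add.comp .id (.const 1)) (.const 2)

theorem coprime_primrec : PrimrecRel Nat.Coprime := by
  have h : Primrec (fun p : ℕ × ℕ => Nat.findGreatest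
      (fun k => p.1 % k = 0 ∧ p.2 % k = 0) (p.1 + p.2)) := by
    refine Primrec.nat_findGreatest (f := fun p : ℕ × ℕ => p.1 + p.2)
      (p := fun p k => p.1 % k = 0 ∧ p.2 % k = 0) (Primrec.nat_add.comp .fst .snd) ?_
    refine PrimrecPred.and (p := fun x : (ℕ × ℕ) × ℕ => x.1.1 % x.2 = 0)
      (q := fun x : (ℕ × ℕ) × ℕ => x.1.2 % x.2 = 0) ?_ ?_
    · exact Primrec.eq.comp (Primrec.nat_mod.comp (Primrec.fst.comp .fst) .snd) (.const 0)
    · exact Primrec.eq.comp (Primrec.nat_mod.comp (Primrec.snd.comp .fst) .snd) (.const 0)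
  have h2 : PrimrecPred (fun p : ℕ × ℕ => Nat.findGreatest
      (fun k => p.1 % k = 0 ∧ p.2 % k = 0) (p.1 + p.2) = 1) := Primrec.eq.comp h (.const 1)
  refine PrimrecPred.of_eq h2 fun p => ?_
  obtain ⟨a, b⟩ := p
  have : Nat.findGreatest (fun k => a % k = 0 ∧ b % k = 0) (a + b) = Nat.gcd a b := by
    rw [Nat.findGreatest_eq_iff]
    refine ⟨?_, fun _ => ?_, ?_⟩
    · rcases Nat.eq_zero_or_pos a with rfl | ha
      · simp
      · exact (Nat.gcd_le_left b ha).trans (by omega)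
    · exact ⟨Nat.mod_eq_zero_of_dvd (Nat.gcd_dvd_left a b),
        Nat.mod_eq_zero_of_dvd (Nat.gcd_dvd_right a b)⟩
    · rintro n hn hn' ⟨h1, h2⟩
      have := Nat.dvd_gcd (Nat.dvd_of_mod_eq_zero h1) (Nat.dvd_of_mod_eq_zero h2)
      rcases Nat.eq_zero_or_pos (Nat.gcd a b) with h0 | h0
      · rw [Nat.gcd_eq_zero_iff] at h0; omega
      · exact absurd (Nat.le_of_dvd h0 this) (by omega)
  simp only [this]

theorem rawPred_primrec : PrimrecPred rawPred := by
  have h2 : PrimrecPred (fun n : ℕ => 0 < n.unpair.2 ∧ Nat.Coprime (absCode n.unpair.1) n.unpair.2) := by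
    refine PrimrecPred.and ?_ ?_
    · exact Primrec.nat_lt.comp (.const 0) (Primrec.snd.comp .unpair)
    · exact coprime_primrec.comp (absCode_primrec.comp (Primrec.fst.comp .unpair))
        (Primrec.snd.comp .unpair)
  refine h2.of_eq fun n => ?_
  unfold rawPred
  rw [← absCode_eq, Equiv.apply_symm_apply]

theorem raw_step (n : ℕ) (h : ∃ k, rawPred (raw (Denumerable.ofNat ℚ n) + k + 1)) :
    raw (Denumerable.ofNat ℚ (n + 1)) = raw (Denumerable.ofNat ℚ n) + Nat.find h + 1 := by
  let := @Encodable.decidableRangeEncode ℚ Rat.instEncodable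
  let : Infinite (Set.range (@Encodable.encode ℚ Rat.instEncodable)) :=
    Infinite.of_injective _ (Equiv.ofInjective _ (@Encodable.encode_injective ℚ Rat.instEncodable)).injective
  have key : ∀ n, raw (Denumerable.ofNat ℚ n) =
      (Nat.Subtype.ofNat (Set.range (@Encodable.encode ℚ Rat.instEncodable)) n : ℕ) := by
    intro n
    have h1 : Denumerable.ofNat ℚ n = (@Encodable.equivRangeEncode ℚ Rat.instEncodable).symm
      (Nat.Subtype.ofNat (Set.range (@Encodable.encode ℚ Rat.instEncodable)) n) := rfl
    rw [h1]
    set x := (Nat.Subtype.ofNat (Set.range (@Encodable.encode ℚ Rat.instEncodable)) n)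
    have h2 := (@Encodable.equivRangeEncode ℚ Rat.instEncodable).apply_symm_apply x
    exact congrArg Subtype.val h2
  have h3 : raw (Denumerable.ofNat ℚ (n+1)) = (Nat.Subtype.succ (Nat.Subtype.ofNat (Set.range (@Encodable.encode ℚ Rat.instEncodable)) n) : ℕ) := key (n+1)
  rw [h3]
  simp only [Nat.Subtype.succ, key n]
  congr 2
  apply Nat.find_congr'
  intro k
  exact range_raw _

theorem exists_step (m : ℕ) : ∃ k, rawPred (m + k + 1) := by
  obtain ⟨n, hn⟩ : ∃ n ∈ Set.range raw, m < n := by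
    have : Function.Injective raw := @Encodable.encode_injective ℚ Rat.instEncodable
    exact (Set.infinite_range_of_injective this).exists_gt m
  refine ⟨n - m - 1, ?_⟩
  rw [show m + (n - m - 1) + 1 = n by omega]
  exact (range_raw n).1 hn.1

theorem raw_ofNat_computable : Computable (fun n => raw (Denumerable.ofNat ℚ n)) := by
  have hp : Computable₂ (fun (m k : ℕ) => decide (rawPred (m + k + 1))) := by
    have : Primrec (fun p : ℕ × ℕ => decide (rawPred (p.1 + p.2 + 1))) :=
      (rawPred_primrec.comp (Primrec.succ.comp (Primrec.nat_add.comp .fst .snd))).decide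
    exact this.to_comp
  have hs := computable_find hp (fun m => by simpa using exists_step m)
  have hs2 : Computable₂ (fun (_ : ℕ) (p : ℕ × ℕ) => p.2 + Nat.find
     (p := fun k => decide (rawPred (p.2 + k + 1)) = true) (by simpa using exists_step p.2) + 1) := by
    have h2 : Computable (fun x : ℕ × (ℕ × ℕ) => x.2.2) := Computable.snd.comp .snd
    exact Computable.succ.comp (Primrec.nat_add.to_comp.comp h2 (hs.comp h2))
  refine (Computable.nat_rec Computable.id (Computable.const (raw (Denumerable.ofNat ℚ 0))) hs2).of_eq ?_
  intro n
  induction n with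
  | zero => rfl
  | succ n ih =>
    simp only [id] at ih ⊢
    rw [ih, raw_step n (exists_step _)]
    congr 2
    apply Nat.find_congr'
    simp

theorem raw_computable : Computable raw :=
  (raw_ofNat_computable.comp Computable.encode).of_eq fun q => by rw [Denumerable.ofNat_encode]

theorem den_computable : Computable (fun q : ℚ => q.den) :=
  ((Computable.snd.comp Computable.unpair).comp raw_computable).of_eq fun q => by simp [raw_eq]

theorem code_computable : Computable (fun q : ℚ => Equiv.intEquivNat q.num) :=
  ((Computable.fst.comp Computable.unpair).comp raw_computable).of_eq fun q => by simp [raw_eq]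

theorem natAbs_computable : Computable (fun q : ℚ => q.num.natAbs) :=
  (absCode_primrec.to_comp.comp code_computable).of_eq fun q => by rw [absCode_eq]

theorem code_even (z : ℤ) : Equiv.intEquivNat z % 2 = 0 ↔ 0 ≤ z := by
  cases z with
  | ofNat n => show (2 * n) % 2 = 0 ↔ _; simp
  | negSucc n => show (2 * n + 1) % 2 = 0 ↔ _; simp

theorem div_computable {M P : ℕ → ℕ} (hM : Computable M) (hP : Computable P) (h0 : ∀ k, 0 < P k) :
    Computable (fun k => (M k : ℚ) / P k) := by
  let p : ℕ → ℕ → Bool := fun k n =>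
    decide (Equiv.intEquivNat (Denumerable.ofNat ℚ n).num % 2 = 0 ∧
      (Denumerable.ofNat ℚ n).num.natAbs * P k = M k * (Denumerable.ofNat ℚ n).den)
  have hq : Computable (fun x : ℕ × ℕ => Denumerable.ofNat ℚ x.2) :=
    (Primrec.ofNat ℚ).to_comp.comp .snd
  have hp : Computable₂ p := by
    have h1 : Computable (fun x : ℕ × ℕ =>
        decide (Equiv.intEquivNat (Denumerable.ofNat ℚ x.2).num % 2 = 0)) :=
      (Primrec.eq (α := ℕ)).decide.to_comp.comp
        (Primrec.nat_mod.to_comp.comp (code_computable.comp hq) (.const 2)) (.const 0)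
    have h2 : Computable (fun x : ℕ × ℕ =>
        decide ((Denumerable.ofNat ℚ x.2).num.natAbs * P x.1 = M x.1 * (Denumerable.ofNat ℚ x.2).den)) :=
      (Primrec.eq (α := ℕ)).decide.to_comp.comp
        (Primrec.nat_mul.to_comp.comp (natAbs_computable.comp hq) (hP.comp .fst))
        (Primrec.nat_mul.to_comp.comp (hM.comp .fst) (den_computable.comp hq))
    refine (Primrec.and.to_comp.comp h1 h2).of_eq fun x => ?_
    simp [p]
  have hspec : ∀ k n, p k n = true ↔ Denumerable.ofNat ℚ n = (M k : ℚ) / P k := by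
    intro k n
    have hPk : (P k : ℚ) ≠ 0 := by exact_mod_cast (h0 k).ne'
    simp only [p, decide_eq_true_eq, code_even]
    generalize Denumerable.ofNat ℚ n = q
    have hqd : (q.den : ℚ) ≠ 0 := by exact_mod_cast q.den_nz
    constructor
    · rintro ⟨h1, h2⟩
      have h3 : (q.num : ℚ) = (q.num.natAbs : ℚ) := by
        rw [Nat.cast_natAbs, abs_of_nonneg h1]
      rw [eq_div_iff hPk]
      conv_lhs => rw [← Rat.num_div_den q]
      rw [div_mul_eq_mul_div, div_eq_iff hqd, h3]
      exact_mod_cast h2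
    · intro h
      have h1 : 0 ≤ q.num := by rw [Rat.num_nonneg, h]; positivity
      refine ⟨h1, ?_⟩
      have h3 : (q.num : ℚ) = (q.num.natAbs : ℚ) := by
        rw [Nat.cast_natAbs, abs_of_nonneg h1]
      rw [eq_div_iff hPk] at h
      rw [← Rat.num_div_den q, div_mul_eq_mul_div, div_eq_iff hqd, h3] at h
      exact_mod_cast h
  have hex : ∀ k, ∃ n, p k n = true := fun k =>
    ⟨@Encodable.encode ℚ Rat.instDenumerable.toEncodable ((M k : ℚ) / P k), by rw [hspec]; exact Denumerable.ofNat_encode _⟩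
  refine ((Primrec.ofNat ℚ).to_comp.comp (computable_find hp hex)).of_eq fun k => ?_
  exact (hspec k _).1 (Nat.find_spec (hex k))


theorem back_dir (α : ℝ) (T : SolovayTest) (d : ℚ) (hd : 0 < d)
    (hinc : ∀ i, T.l i + d * (T.r i - T.l i) ≤ T.l (i + 1)) (hc : T.Covers α) :
    ∃ a : ℕ → ℚ, IsCompApprox a α ∧ Monotone a ∧ IsSpeedable a α := by
  have hmono : Monotone T.l := monotone_nat_of_le_succ fun i => by
    have := mul_nonneg hd.le (sub_nonneg.2 (T.le i))
    linarith [hinc i]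
  have hlim0 : Tendsto (fun i => (T.r i : ℝ) - (T.l i : ℝ)) atTop (nhds 0) :=
    T.summable.tendsto_atTop_zero
  have hle : ∀ i, (T.l i : ℝ) ≤ α := by
    intro i
    obtain ⟨j, hj, hj2⟩ := (frequently_atTop.1 hc) i
    exact le_trans (by exact_mod_cast hmono hj) hj2.1
  have hlim : Tendsto (fun s => (T.l s : ℝ)) atTop (nhds α) := by
    rw [Metric.tendsto_atTop]
    intro ε hε
    obtain ⟨N, hN⟩ := (Metric.tendsto_atTop.1 hlim0) ε hε
    obtain ⟨j, hj, hj2⟩ := (frequently_atTop.1 hc) N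
    refine ⟨j, fun n hn => ?_⟩
    have h1 := hN j hj
    have h2 : (T.l j : ℝ) ≤ T.l n := by exact_mod_cast hmono hn
    have h3 := hle n
    rw [Real.dist_eq, abs_lt] at *
    constructor <;> linarith [hj2.1, hj2.2, h1.1, h1.2]
  refine ⟨T.l, ⟨T.comp_l, T.mem_l, hlim⟩, hmono, max 0 (1 - d), le_max_left _ _, ?_, ?_⟩
  · exact max_lt one_pos (by linarith)
  by_cases hq : ∃ q : ℚ, α = (q : ℝ)
  · exact Or.inl hq
  right
  refine ⟨fun s => s + 1, ⟨Computable.succ, fun a b h => Nat.succ_le_succ h,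
    tendsto_add_atTop_nat 1⟩, ?_⟩
  unfold speedLiminf
  refine liminf_le_of_frequently_le' ?_
  refine hc.mono fun i hi => ?_
  rw [EReal.coe_le_coe_iff]
  have h1 : 0 < α - T.l i :=
    lt_of_le_of_ne (sub_nonneg.2 (hle i)) fun h => hq ⟨T.l i, by linarith⟩
  have h2 : 0 ≤ α - T.l (i + 1) := sub_nonneg.2 (hle _)
  rw [abs_of_nonneg (div_nonneg h2 h1.le), div_le_iff₀ h1]
  have h3 : (T.l i : ℝ) + d * (T.r i - T.l i) ≤ T.l (i + 1) := by exact_mod_cast hinc i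
  have hd' : (0 : ℝ) < d := by exact_mod_cast hd
  have h4 : (d : ℝ) * (α - T.l i) ≤ d * (T.r i - T.l i) :=
    mul_le_mul_of_nonneg_left (by linarith [hi.2]) hd'.le
  have h5 : (1 - d : ℝ) * (α - T.l i) ≤ ((max 0 (1 - d) : ℚ) : ℝ) * (α - T.l i) := by
    refine mul_le_mul_of_nonneg_right ?_ h1.le
    have : (1 - d : ℚ) ≤ max 0 (1 - d) := le_max_right _ _
    exact_mod_cast this
  linarith

/-- The numerator of the right endpoint. -/
def rNum (C : ℕ) (x y : ℚ) : ℕ :=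
  min (x.den * y.den) (x.num.natAbs * y.den +
    C * (y.num.natAbs * x.den - x.num.natAbs * y.den))

theorem rNum_eq (C : ℕ) (x y : ℚ) (hx : 0 ≤ x) (hxy : x ≤ y) :
    (rNum C x y : ℚ) / ((x.den * y.den : ℕ) : ℚ) = min 1 (x + C * (y - x)) := by
  have aux : ∀ q : ℚ, 0 ≤ q → (q.num.natAbs : ℚ) = q * q.den := by
    intro q hq
    rw [Nat.cast_natAbs, abs_of_nonneg (Rat.num_nonneg.2 hq), Rat.mul_den_eq_num]
  have ax := aux x hx
  have ay := aux y (hx.trans hxy)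
  have hdx : (0 : ℚ) < x.den := by exact_mod_cast x.den_pos
  have hdy : (0 : ℚ) < y.den := by exact_mod_cast y.den_pos
  have hle : x.num.natAbs * y.den ≤ y.num.natAbs * x.den := by
    have : (x.num.natAbs * y.den : ℚ) ≤ y.num.natAbs * x.den := by
      rw [ax, ay]
      have := mul_le_mul_of_nonneg_right hxy (mul_pos hdx hdy).le
      linarith
    exact_mod_cast this
  have hP : (0 : ℚ) < x.den * y.den := mul_pos hdx hdy
  unfold rNum
  push_cast [Nat.cast_sub hle]
  rw [ax, ay, ← min_div_div_right hP.le]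
  congr 1 <;> field_simp

theorem r_computable {b : ℕ → ℚ} (hbc : Computable b) (C : ℕ) (hb0 : ∀ k, 0 ≤ b k)
    (hbm : ∀ k, b k ≤ b (k + 1)) :
    Computable (fun k => min 1 (b k + C * (b (k + 1) - b k))) := by
  have hb' : Computable (fun k => b (k + 1)) := hbc.comp Computable.succ
  have hN : Computable (fun k => (b k).num.natAbs) := natAbs_computable.comp hbc
  have hN' : Computable (fun k => (b (k + 1)).num.natAbs) := natAbs_computable.comp hb'
  have hD : Computable (fun k => (b k).den) := den_computable.comp hbc
  have hD' : Computable (fun k => (b (k + 1)).den) := den_computable.comp hb'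
  have hmul := Primrec.nat_mul.to_comp
  have hP : Computable (fun k => (b k).den * (b (k + 1)).den) := hmul.comp hD hD'
  have h1 : Computable (fun k => (b k).num.natAbs * (b (k + 1)).den) := hmul.comp hN hD'
  have h2 : Computable (fun k => (b (k + 1)).num.natAbs * (b k).den) := hmul.comp hN' hD
  have h3 : Computable (fun k => C * ((b (k + 1)).num.natAbs * (b k).den -
      (b k).num.natAbs * (b (k + 1)).den)) :=
    hmul.comp (Computable.const C) (Primrec.nat_sub.to_comp.comp h2 h1)
  have hM : Computable (fun k => rNum C (b k) (b (k + 1))) := by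
    unfold rNum
    exact Primrec.nat_min.to_comp.comp hP (Primrec.nat_add.to_comp.comp h1 h3)
  exact (div_computable hM hP fun k => Nat.mul_pos (Rat.den_pos _) (Rat.den_pos _)).of_eq
    fun k => rNum_eq C _ _ (hb0 k) (hbm k)

theorem fwd_dir (α : ℝ) (hα : α ∈ Set.Ioo (0 : ℝ) 1) (a : ℕ → ℚ) (ha : IsCompApprox a α)
    (hm : Monotone a) (hs : IsSpeedable a α) :
    ∃ T : SolovayTest,
        (∃ d : ℚ, 0 < d ∧ ∀ i, T.l i + d * (T.r i - T.l i) ≤ T.l (i + 1)) ∧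
        T.Covers α := by
  obtain ⟨ρ, hρ0, hρ1, hs⟩ := hs
  by_cases hq : ∃ q : ℚ, α = (q : ℝ)
  · obtain ⟨q, rfl⟩ := hq
    have h0 : q ∈ Set.Icc (0 : ℚ) 1 :=
      ⟨by exact_mod_cast hα.1.le, by exact_mod_cast hα.2.le⟩
    refine ⟨⟨fun _ => q, fun _ => q, Computable.const q, Computable.const q, fun _ => h0,
      fun _ => h0, fun _ => le_rfl, by simp⟩, ⟨1, one_pos, by simp⟩, ?_⟩
    exact Frequently.of_forall fun _ => ⟨le_rfl, le_rfl⟩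
  obtain ⟨f, ⟨hfc, hfm, -⟩, hlim⟩ := hs.resolve_left hq
  obtain ⟨hac, ha01, hat⟩ := ha
  have hle : ∀ i, (a i : ℝ) ≤ α := fun i =>
    Monotone.ge_of_tendsto (f := fun s => (a s : ℝ)) (fun x y h => Rat.cast_le.2 (hm h)) hat i
  have hlt : ∀ i, 0 < α - a i := fun i =>
    lt_of_le_of_ne (sub_nonneg.2 (hle i)) fun h => hq ⟨a i, by linarith⟩
  obtain ⟨ρ', hρ', hρ'1⟩ := exists_between hρ1
  have hfreq : ∃ᶠ s in atTop, α - a (f s) ≤ ρ' * (α - a s) := by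
    have h1 : speedLiminf a f α < ((ρ' : ℝ) : EReal) :=
      lt_of_le_of_lt hlim (by exact_mod_cast hρ')
    refine (frequently_lt_of_liminf_lt (by isBoundedDefault) h1).mono fun s hs => ?_
    rw [EReal.coe_lt_coe_iff, abs_of_nonneg (div_nonneg (hlt _).le (hlt _).le),
      div_lt_iff₀ (hlt s)] at hs
    exact hs.le
  -- the fast sequence of stages
  let S : ℕ → ℕ := fun n => Nat.rec 0 (fun _ m => max (f m) (m + 1)) n
  have hS1 : ∀ n, S (n + 1) = max (f (S n)) (S n + 1) := fun n => rfl
  have hSc : Computable S := by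
    have h2 : Computable (fun x : ℕ × (ℕ × ℕ) => x.2.2) := Computable.snd.comp .snd
    exact Computable.nat_rec Computable.id (Computable.const 0)
      (h := fun _ p => max (f p.2) (p.2 + 1))
      (Primrec.nat_max.to_comp.comp (hfc.comp h2) (Computable.succ.comp h2))
  have hSm : StrictMono S := strictMono_nat_of_lt_succ fun n => by rw [hS1]; omega
  let b : ℕ → ℚ := fun n => a (S n)
  have hbc : Computable b := hac.comp hSc
  have hbm : ∀ n, b n ≤ b (n + 1) := fun n => hm (hSm (Nat.lt_succ_self n)).le
  let σ : ℚ := (1 + ρ') / 2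
  have hσ1 : σ < 1 := by simp only [σ]; linarith
  have hσ0 : 0 < σ := by simp only [σ]; linarith
  have hσρ : ρ' ≤ σ * σ := by simp only [σ]; nlinarith [sq_nonneg (1 - ρ')]
  have hσ1' : (σ : ℝ) < 1 := by exact_mod_cast hσ1
  have hσ0' : (0 : ℝ) < σ := by exact_mod_cast hσ0
  have hσρ' : (ρ' : ℝ) ≤ σ * σ := by exact_mod_cast hσρ
  have hbfreq : ∃ᶠ k in atTop, α - b (k + 1) ≤ σ * (α - b k) := by
    rw [frequently_atTop]
    intro K
    obtain ⟨s, hsK, hs⟩ := frequently_atTop.1 hfreq (S K)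
    -- the last stage below `s`
    have hex : ∃ n, s < S n := ⟨s + 1, lt_of_lt_of_le (Nat.lt_succ_self s) (hSm.id_le (s + 1))⟩
    obtain ⟨n, hn1, hn2⟩ : ∃ n, s < S n ∧ ∀ m < n, ¬ s < S m :=
      by classical exact ⟨Nat.find hex, Nat.find_spec hex, fun m hm => Nat.find_min hex hm⟩
    have hKn : K < n := hSm.lt_iff_lt.1 (lt_of_le_of_lt hsK hn1)
    obtain ⟨k, rfl⟩ : ∃ k, n = k + 1 := ⟨n - 1, by omega⟩
    have hks : S k ≤ s := not_lt.1 (hn2 k (Nat.lt_succ_self k))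
    have hf2 : f s ≤ S (k + 2) := (hfm hn1.le).trans (by rw [hS1 (k + 1)]; exact le_max_left _ _)
    have e1 : (a (f s) : ℝ) ≤ b (k + 2) := by exact_mod_cast hm hf2
    have e2 : (b k : ℝ) ≤ a s := by exact_mod_cast hm hks
    have e3 : α - b (k + 2) ≤ σ * σ * (α - b k) := by
      have h1 : (ρ' : ℝ) * (α - a s) ≤ σ * σ * (α - a s) :=
        mul_le_mul_of_nonneg_right hσρ' (hlt s).le
      have h2 : (σ * σ : ℝ) * (α - a s) ≤ σ * σ * (α - b k) :=
        mul_le_mul_of_nonneg_left (by linarith) (by positivity)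
      linarith
    by_cases hk : α - b (k + 1) ≤ σ * (α - b k)
    · exact ⟨k, by omega, hk⟩
    · refine ⟨k + 1, by omega, ?_⟩
      have := mul_le_mul_of_nonneg_left (not_le.1 hk).le hσ0'.le
      show α - b (k + 2) ≤ _
      linarith
  obtain ⟨C, hC⟩ := exists_nat_ge (1 / (1 - σ))
  have hσp : 0 < 1 - σ := by linarith
  have hC1 : (1 : ℚ) ≤ C := le_trans (by rw [le_div_iff₀ hσp]; linarith) hC
  have hCσ : 1 ≤ C * (1 - σ) := by rwa [div_le_iff₀ hσp] at hC
  let r : ℕ → ℚ := fun k => min 1 (b k + C * (b (k + 1) - b k))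
  have hb0 : ∀ k, 0 ≤ b k := fun k => (ha01 _).1
  have hrc : Computable r := r_computable hbc C hb0 hbm
  have hbr : ∀ k, b k ≤ r k := fun k => by
    refine le_min (ha01 _).2 ?_
    have := mul_nonneg (zero_le_one.trans hC1) (sub_nonneg.2 (hbm k))
    linarith
  have hr : ∀ k, r k - b k ≤ C * (b (k + 1) - b k) := fun k => by
    have : r k ≤ b k + C * (b (k + 1) - b k) := min_le_right _ _
    linarith
  have hsum : Summable (fun i => (r i : ℝ) - (b i : ℝ)) := by
    refine summable_of_sum_range_le (c := (C : ℝ)) (fun k => ?_) fun n => ?_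
    · have : (b k : ℝ) ≤ r k := by exact_mod_cast hbr k
      linarith
    · have h1 : ∑ i ∈ Finset.range n, ((r i : ℝ) - b i) ≤
          ∑ i ∈ Finset.range n, (C : ℝ) * ((b (i + 1) : ℝ) - b i) :=
        Finset.sum_le_sum fun k _ => by exact_mod_cast hr k
      rw [← Finset.mul_sum, Finset.sum_range_sub (fun i => (b i : ℝ))] at h1
      have h2 : (b n : ℝ) ≤ 1 := by exact_mod_cast (ha01 (S n)).2
      have h3 : (0 : ℝ) ≤ b 0 := by exact_mod_cast hb0 0
      have h4 : (C : ℝ) * (b n - b 0) ≤ C * 1 :=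
        mul_le_mul_of_nonneg_left (by linarith) (Nat.cast_nonneg C)
      linarith
  refine ⟨⟨b, r, hbc, hrc, fun k => ha01 _, fun k => ⟨(hb0 k).trans (hbr k), min_le_left _ _⟩,
    hbr, hsum⟩, ⟨1 / C, by positivity, fun k => ?_⟩, ?_⟩
  · show b k + 1 / C * (r k - b k) ≤ b (k + 1)
    have hCp : (0 : ℚ) < C := by linarith
    have : 1 / (C : ℚ) * (r k - b k) ≤ b (k + 1) - b k := by
      rw [div_mul_eq_mul_div, one_mul, div_le_iff₀ hCp]
      linarith [hr k]
    linarith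
  · refine hbfreq.mono fun k hk => ⟨hle _, ?_⟩
    show α ≤ ((min 1 (b k + C * (b (k + 1) - b k)) : ℚ) : ℝ)
    push_cast
    refine le_min hα.2.le ?_
    have h1 : (1 - σ : ℝ) * (α - b k) ≤ b (k + 1) - b k := by linarith
    have h2 := mul_le_mul_of_nonneg_left h1 (Nat.cast_nonneg (α := ℝ) C)
    have h3 : (1 : ℝ) ≤ C * (1 - σ) := by exact_mod_cast hCσ
    have h4 := mul_le_mul_of_nonneg_right h3 (hlt (S k)).le
    have h5 : (a (S k) : ℝ) = b k := rfl
    rw [h5] at h4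
    linarith

end LceAux

theorem lce_speedable_iff_covered_by_bounded_increments_test (α : ℝ)
    (hα : α ∈ Set.Ioo (0 : ℝ) 1) :
    (∃ a : ℕ → ℚ, IsCompApprox a α ∧ Monotone a ∧ IsSpeedable a α) ↔
      ∃ T : SolovayTest,
        (∃ d : ℚ, 0 < d ∧ ∀ i, T.l i + d * (T.r i - T.l i) ≤ T.l (i + 1)) ∧
        T.Covers α := by
  constructor
  · rintro ⟨a, ha, hm, hs⟩
    exact LceAux.fwd_dir α hα a ha hm hs
  · rintro ⟨T, ⟨d, hd, hinc⟩, hc⟩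
    exact LceAux.back_dir α T d hd hinc hc
end
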